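/- Let ω be a convex open subdomain of the upper unit hemisphere S₊^{n−1} ⊂ S^{n−1}. Then the first nonzero eigenvalue Λ of the Laplace–Beltrami operator on ω with zero Neumann boundary conditions satisfies Λ ≥ n − 1. -/

import Mathlib

open MeasureTheory Set
open scoped ENNReal
noncomputable section


lemma bm_compact (A B : Set ℝ) (hA : IsCompact A) (hB : IsCompact B) (hAn : A.Nonempty)
    (hBn : B.Nonempty) (C : Set ℝ) (h : ∀ x ∈ A, ∀ y ∈ B, (x + y) / 2 ∈ C) :
    volume A + volume B ≤ 2 * volume C := by
  obtain ⟨a, ha, hamax⟩ := hA.exists_isGreatest hAn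
  obtain ⟨b, hb, hbmin⟩ := hB.exists_isLeast hBn
  have hD : volume ((fun t : ℝ => t * (1/2)) ⁻¹' C) = 2 * volume C := by
    rw [Real.volume_preimage_mul_right (by norm_num)]
    norm_num
  rw [← hD]
  have h1 : volume ((fun t => t - b) ⁻¹' A) = volume A := by
    simp only [sub_eq_add_neg, measure_preimage_add_right]
  have h2 : volume ((fun t => t - a) ⁻¹' B) = volume B := by
    simp only [sub_eq_add_neg, measure_preimage_add_right]
  rw [← h1, ← h2]
  have hm : MeasurableSet ((fun t => t - a) ⁻¹' B) :=
    (measurable_id.sub_const a) hB.isClosed.measurableSet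
  rw [← measure_union₀ hm.nullMeasurableSet]
  · apply measure_mono
    rintro t (ht | ht)
    · have := h _ ht b hb
      simpa [div_eq_mul_inv] using this
    · have := h a ha _ ht
      simpa [div_eq_mul_inv] using this
  · refine measure_mono_null (t := {a + b}) ?_ (by simp)
    rintro t ⟨ht, ht'⟩
    have h3 := hamax ht
    have h4 := hbmin ht'
    simp only [mem_singleton_iff]
    linarith

lemma bm_one (A B : Set ℝ) (hA : MeasurableSet A) (hB : MeasurableSet B) (hAn : A.Nonempty)
    (hBn : B.Nonempty) (C : Set ℝ) (h : ∀ x ∈ A, ∀ y ∈ B, (x + y) / 2 ∈ C) :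
    volume A + volume B ≤ 2 * volume C := by
  obtain ⟨a, ha⟩ := hAn
  obtain ⟨b, hb⟩ := hBn
  rw [hA.measure_eq_iSup_isCompact, hB.measure_eq_iSup_isCompact]
  rw [ENNReal.iSup_add]
  refine iSup_le fun K1 => ?_
  rw [ENNReal.add_iSup]
  refine iSup_le fun K2 => ?_
  by_cases h1 : K1 ⊆ A ∧ IsCompact K1
  · by_cases h2 : K2 ⊆ B ∧ IsCompact K2
    · have := bm_compact (insert a K1) (insert b K2) (h1.2.insert a) (h2.2.insert b)
        ⟨a, by simp⟩ ⟨b, by simp⟩ C (fun x hx y hy => h x (insert_subset ha h1.1 hx) y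
          (insert_subset hb h2.1 hy))
      refine le_trans ?_ this
      simp only [h1, h2, iSup_pos]
      gcongr <;> exact subset_insert _ _
    · have h3 : (⨆ (_ : K2 ⊆ B), ⨆ (_ : IsCompact K2), volume K2) = 0 := by
        simp only [iSup_eq_bot, ← bot_eq_zero]
        tauto
      rw [h3, add_zero]
      have := bm_compact (insert a K1) {b} (h1.2.insert a) isCompact_singleton
        ⟨a, by simp⟩ ⟨b, by simp⟩ C (fun x hx y hy => h x (insert_subset ha h1.1 hx) y
          (by simp at hy; rwa [hy]))
      refine le_trans ?_ this
      simp only [h1, iSup_pos]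
      exact le_add_right (measure_mono (subset_insert _ _))
  · have h3 : (⨆ (_ : K1 ⊆ A), ⨆ (_ : IsCompact K1), volume K1) = 0 := by
      simp only [iSup_eq_bot, ← bot_eq_zero]
      tauto
    rw [h3, zero_add]
    by_cases h2 : K2 ⊆ B ∧ IsCompact K2
    · have := bm_compact {a} (insert b K2) isCompact_singleton (h2.2.insert b)
        ⟨a, by simp⟩ ⟨b, by simp⟩ C (fun x hx y hy => h x (by simp at hx; rwa [hx]) y
          (insert_subset hb h2.1 hy))
      refine le_trans ?_ this
      simp only [h2, iSup_pos]
      exact le_add_left (measure_mono (subset_insert _ _))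
    · have h3 : (⨆ (_ : K2 ⊆ B), ⨆ (_ : IsCompact K2), volume K2) = 0 := by
        simp only [iSup_eq_bot, ← bot_eq_zero]
        tauto
      rw [h3]; simp

lemma pl_normalized (f g h : ℝ → ℝ) (hf : Measurable f) (hg : Measurable g) (hh : Measurable h)
    (hf0 : ∀ x, 0 ≤ f x) (hg0 : ∀ x, 0 ≤ g x) (hh0 : ∀ x, 0 ≤ h x)
    (hf1 : ∀ x, f x ≤ 1) (hg1 : ∀ x, g x ≤ 1)
    (hfs : ∀ t < 1, ∃ x, t < f x) (hgs : ∀ t < 1, ∃ x, t < g x)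
    (H : ∀ x y, f x * g y ≤ h ((x + y) / 2) ^ 2) :
    (∫⁻ x, ENNReal.ofReal (f x)) + (∫⁻ x, ENNReal.ofReal (g x)) ≤
      2 * ∫⁻ x, ENNReal.ofReal (h x) := by
  rw [lintegral_eq_lintegral_meas_lt _ (ae_of_all _ hf0) hf.aemeasurable,
    lintegral_eq_lintegral_meas_lt _ (ae_of_all _ hg0) hg.aemeasurable,
    lintegral_eq_lintegral_meas_lt _ (ae_of_all _ hh0) hh.aemeasurable]
  have hmf : ∀ φ : ℝ → ℝ, Measurable fun t => volume {a | t < φ a} := by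
    intro φ
    have : Antitone fun t => volume {a | t < φ a} := fun s t hst =>
      measure_mono fun a (ha : t < φ a) => lt_of_le_of_lt hst ha
    exact this.measurable
  rw [← lintegral_const_mul _ (hmf h), ← lintegral_add_left (hmf f)]
  refine setLIntegral_mono' measurableSet_Ioi fun t ht => ?_
  have ht0 : 0 < t := ht
  rcases lt_or_ge t 1 with h1 | h1
  · refine bm_one _ _ (hf measurableSet_Ioi) (hg measurableSet_Ioi) (hfs t h1) (hgs t h1) _ ?_
    intro x hx y hy
    have hx' : t < f x := hx
    have hy' : t < g y := hy
    show t < h ((x + y) / 2)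
    refine lt_of_pow_lt_pow_left₀ 2 (hh0 _) (lt_of_lt_of_le ?_ (H x y))
    nlinarith
  · have e1 : {a | t < f a} = ∅ := by
      ext a; simp; linarith [hf1 a]
    have e2 : {a | t < g a} = ∅ := by
      ext a; simp; linarith [hg1 a]
    simp [e1, e2]

lemma ennreal_amgm (F G H : ℝ≥0∞) (h : F + G ≤ 2 * H) : F * G ≤ H ^ 2 := by
  by_cases hH : H = ∞
  · simp [hH]
  have hFG : F + G ≠ ∞ := ne_top_of_le_ne_top (ENNReal.mul_ne_top (by simp) hH) h
  have hF : F ≠ ∞ := fun h' => hFG (by simp [h'])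
  have hG : G ≠ ∞ := fun h' => hFG (by simp [h'])
  lift F to NNReal using hF
  lift G to NNReal using hG
  lift H to NNReal using hH
  norm_cast at *
  have h' : (F : ℝ) + G ≤ 2 * H := by exact_mod_cast h
  have : (F : ℝ) * G ≤ H ^ 2 := by
    nlinarith [sq_nonneg ((F : ℝ) - G), F.2, G.2, H.2, F.coe_nonneg, G.coe_nonneg, H.coe_nonneg]
  exact_mod_cast this

lemma pl_bounded (f g h : ℝ → ℝ≥0∞) (hf : Measurable f) (hg : Measurable g) (hh : Measurable h)
    (N : NNReal) (hfN : ∀ x, f x ≤ N) (hgN : ∀ x, g x ≤ N)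
    (H : ∀ x y, f x * g y ≤ h ((x + y) / 2) ^ 2) :
    (∫⁻ x, f x) * (∫⁻ x, g x) ≤ (∫⁻ x, h x) ^ 2 := by
  set a := ⨆ x, f x with ha
  set b := ⨆ x, g x with hb
  have haN : a ≤ N := iSup_le hfN
  have hbN : b ≤ N := iSup_le hgN
  have hat : a ≠ ∞ := ne_top_of_le_ne_top (by simp) haN
  have hbt : b ≠ ∞ := ne_top_of_le_ne_top (by simp) hbN
  by_cases ha0 : a = 0
  · have : ∀ x, f x = 0 := fun x => by
      have := le_iSup f x
      rw [← ha, ha0] at this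
      simpa using this
    simp [this]
  by_cases hb0 : b = 0
  · have : ∀ x, g x = 0 := fun x => by
      have := le_iSup g x
      rw [← hb, hb0] at this
      simpa using this
    simp [this]
  set c : ℝ≥0∞ := (a * b) ^ (1 / 2 : ℝ) with hc
  have hc2 : c ^ 2 = a * b := by
    rw [hc, ← ENNReal.rpow_natCast, ← ENNReal.rpow_mul]; norm_num
  have hc0 : c ≠ 0 := by
    intro h0; rw [h0] at hc2; simp at hc2; tauto
  have hct : c ≠ ∞ := by
    intro h0; rw [h0] at hc2
    have := ENNReal.mul_ne_top hat hbt
    rw [← hc2] at this; simp at this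
  have hfa : ∀ x, f x / a ≤ 1 := fun x => ENNReal.div_le_of_le_mul (by simpa using le_iSup f x)
  have hgb : ∀ x, g x / b ≤ 1 := fun x => ENNReal.div_le_of_le_mul (by simpa using le_iSup g x)
  have hfat : ∀ x, f x / a ≠ ∞ := fun x => ne_top_of_le_ne_top (by simp) (hfa x)
  have hgbt : ∀ x, g x / b ≠ ∞ := fun x => ne_top_of_le_ne_top (by simp) (hgb x)
  have hht : ∀ x, min (h x / c) 1 ≠ ∞ := fun x => ne_top_of_le_ne_top (by simp) (min_le_right _ _)
  have key := pl_normalized (fun x => (f x / a).toReal) (fun x => (g x / b).toReal)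
    (fun x => (min (h x / c) 1).toReal) (by fun_prop) (by fun_prop) (by fun_prop)
    (fun _ => by positivity) (fun _ => by positivity) (fun _ => by positivity)
    (fun x => by simpa using ENNReal.toReal_mono (by simp) (hfa x))
    (fun x => by simpa using ENNReal.toReal_mono (by simp) (hgb x))
    ?_ ?_ ?_
  · simp only [ENNReal.ofReal_toReal (hfat _), ENNReal.ofReal_toReal (hgbt _),
      ENNReal.ofReal_toReal (hht _)] at key
    have k2 : (∫⁻ x, f x / a) + (∫⁻ x, g x / b) ≤ 2 * ∫⁻ x, h x / c :=
      key.trans (by gcongr; exact min_le_left _ _)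
    have k3 := ennreal_amgm _ _ _ k2
    simp only [div_eq_mul_inv] at k3
    rw [lintegral_mul_const _ hf, lintegral_mul_const _ hg, lintegral_mul_const _ hh] at k3
    calc (∫⁻ x, f x) * (∫⁻ x, g x)
        = ((∫⁻ x, f x) * a⁻¹ * ((∫⁻ x, g x) * b⁻¹)) * (a * b) := by
          have e1 := ENNReal.inv_mul_cancel ha0 hat
          have e2 := ENNReal.inv_mul_cancel hb0 hbt
          calc _ = (∫⁻ x, f x) * (∫⁻ x, g x) * 1 * 1 := by ring
            _ = (∫⁻ x, f x) * (∫⁻ x, g x) * (a⁻¹ * a) * (b⁻¹ * b) := by rw [e1, e2]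
            _ = _ := by ring
      _ ≤ ((∫⁻ x, h x) * c⁻¹) ^ 2 * (a * b) := by gcongr
      _ = (∫⁻ x, h x) ^ 2 := by
          rw [← hc2, mul_pow, mul_assoc, ← mul_pow, ENNReal.inv_mul_cancel hc0 hct]; simp
  · intro t ht
    rcases lt_or_ge t 0 with h0 | h0
    · exact ⟨0, lt_of_lt_of_le h0 (by positivity)⟩
    have : ENNReal.ofReal t * a < a := by
      calc ENNReal.ofReal t * a < 1 * a := by
            rw [ENNReal.mul_lt_mul_iff_left ha0 hat]; simpa using ht
        _ = a := one_mul a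
    obtain ⟨x, hx⟩ := lt_iSup_iff.1 this
    refine ⟨x, ?_⟩
    rw [← ENNReal.ofReal_lt_iff_lt_toReal h0 (hfat x)]
    rwa [ENNReal.lt_div_iff_mul_lt (Or.inl ha0) (Or.inl hat)]
  · intro t ht
    rcases lt_or_ge t 0 with h0 | h0
    · exact ⟨0, lt_of_lt_of_le h0 (by positivity)⟩
    have : ENNReal.ofReal t * b < b := by
      calc ENNReal.ofReal t * b < 1 * b := by
            rw [ENNReal.mul_lt_mul_iff_left hb0 hbt]; simpa using ht
        _ = b := one_mul b
    obtain ⟨x, hx⟩ := lt_iSup_iff.1 this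
    refine ⟨x, ?_⟩
    rw [← ENNReal.ofReal_lt_iff_lt_toReal h0 (hgbt x)]
    rwa [ENNReal.lt_div_iff_mul_lt (Or.inl hb0) (Or.inl hbt)]
  · intro x y
    rw [← ENNReal.toReal_mul, ← ENNReal.toReal_pow]
    refine ENNReal.toReal_mono (ENNReal.pow_ne_top (hht _)) ?_
    rcases le_total (h ((x + y) / 2) / c) 1 with h1 | h1
    · rw [min_eq_left h1]
      simp only [div_eq_mul_inv, mul_pow]
      rw [← ENNReal.inv_pow, hc2, ENNReal.mul_inv (Or.inl ha0) (Or.inl hat)]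
      calc f x * a⁻¹ * (g y * b⁻¹) = (f x * g y) * (a⁻¹ * b⁻¹) := by ring
        _ ≤ _ := by gcongr; simpa [div_eq_mul_inv] using H x y
    · rw [min_eq_right h1]
      simpa using mul_le_mul' (hfa x) (hgb y)

lemma pl_one (f g h : ℝ → ℝ≥0∞) (hf : Measurable f) (hg : Measurable g) (hh : Measurable h)
    (H : ∀ x y, f x * g y ≤ h ((x + y) / 2) ^ 2) :
    (∫⁻ x, f x) * (∫⁻ x, g x) ≤ (∫⁻ x, h x) ^ 2 := by
  have key : ∀ N : ℕ, (∫⁻ x, min (f x) N) * (∫⁻ x, min (g x) N) ≤ (∫⁻ x, h x) ^ 2 := by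
    intro N
    refine pl_bounded _ _ h (by fun_prop) (by fun_prop) hh (N : NNReal)
      (fun x => by simp) (fun x => by simp) ?_
    intro x y
    exact (mul_le_mul' (min_le_left _ _) (min_le_left _ _)).trans (H x y)
  have lim : ∀ φ : ℝ → ℝ≥0∞, Measurable φ → Filter.Tendsto (fun N : ℕ => ∫⁻ x, min (φ x) N)
      Filter.atTop (nhds (∫⁻ x, φ x)) := by
    intro φ hφ
    refine lintegral_tendsto_of_tendsto_of_monotone (fun N => by fun_prop) ?_ ?_
    · refine ae_of_all _ fun x m n hmn => ?_
      dsimp only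
      gcongr
    · refine ae_of_all _ fun x => ?_
      have : Filter.Tendsto (fun N : ℕ => min (φ x) (N : ℝ≥0∞)) Filter.atTop
          (nhds (min (φ x) ∞)) := tendsto_const_nhds.min ENNReal.tendsto_nat_nhds_top
      simpa using this
  by_cases hF : (∫⁻ x, f x) = 0
  · simp [hF]
  by_cases hG : (∫⁻ x, g x) = 0
  · simp [hG]
  exact le_of_tendsto' (ENNReal.Tendsto.mul (lim f hf) (Or.inl hF) (lim g hg) (Or.inl hG)) key

theorem pl_pi (n : ℕ) : ∀ (f g h : (Fin n → ℝ) → ℝ≥0∞), Measurable f → Measurable g →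
    Measurable h → (∀ x y, f x * g y ≤ h ((1 / 2 : ℝ) • (x + y)) ^ 2) →
    (∫⁻ x, f x) * (∫⁻ x, g x) ≤ (∫⁻ x, h x) ^ 2 := by
  induction n with
  | zero =>
    intro f g h hf hg hh H
    have hv : (volume : Measure (Fin 0 → ℝ)) = Measure.dirac isEmptyElim := by
      rw [volume_pi]; exact Measure.pi_of_empty _ _
    rw [hv, lintegral_dirac' _ hf, lintegral_dirac' _ hg, lintegral_dirac' _ hh]
    have := H isEmptyElim isEmptyElim
    rwa [Subsingleton.elim ((1 / 2 : ℝ) • _) (isEmptyElim : Fin 0 → ℝ)] at this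
  | succ n ih =>
    intro f g h hf hg hh H
    have e := (volume_preserving_piFinSuccAbove (fun _ : Fin (n + 1) => ℝ) 0).symm
    set E := (MeasurableEquiv.piFinSuccAbove (fun _ : Fin (n + 1) => ℝ) 0).symm with hE
    have key : ∀ φ : (Fin (n + 1) → ℝ) → ℝ≥0∞, Measurable φ →
        ∫⁻ x, φ x = ∫⁻ t : ℝ, ∫⁻ y : Fin n → ℝ, φ (E (t, y)) := by
      intro φ hφ
      rw [← e.lintegral_comp hφ, Measure.volume_eq_prod, lintegral_prod]
      exact (hφ.comp E.measurable).aemeasurable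
    rw [key f hf, key g hg, key h hh]
    have hEm := E.measurable
    refine pl_one _ _ _ ?_ ?_ ?_ ?_
    · exact Measurable.lintegral_prod_right' (f := fun p : ℝ × (Fin n → ℝ) => f (E p)) (hf.comp hEm)
    · exact Measurable.lintegral_prod_right' (f := fun p : ℝ × (Fin n → ℝ) => g (E p)) (hg.comp hEm)
    · exact Measurable.lintegral_prod_right' (f := fun p : ℝ × (Fin n → ℝ) => h (E p)) (hh.comp hEm)
    intro s t
    refine ih _ _ _ (by fun_prop) (by fun_prop) (by fun_prop) ?_
    intro x y
    have := H (E (s, x)) (E (t, y))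
    convert this using 3
    ext i
    refine Fin.cases ?_ (fun j => ?_) i
    · simp [hE, MeasurableEquiv.piFinSuccAbove, Fin.insertNthEquiv]; ring
    · simp [hE, MeasurableEquiv.piFinSuccAbove, Fin.insertNthEquiv]; ring

theorem pl_euclidean (n : ℕ) (f g h : EuclideanSpace ℝ (Fin n) → ℝ≥0∞) (hf : Measurable f)
    (hg : Measurable g) (hh : Measurable h)
    (H : ∀ x y, f x * g y ≤ h ((1 / 2 : ℝ) • (x + y)) ^ 2) :
    (∫⁻ x, f x) * (∫⁻ x, g x) ≤ (∫⁻ x, h x) ^ 2 := by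
  have e := PiLp.volume_preserving_toLp (Fin n)
  rw [← e.lintegral_comp hf, ← e.lintegral_comp hg, ← e.lintegral_comp hh]
  refine pl_pi n _ _ _ (hf.comp e.measurable) (hg.comp e.measurable) (hh.comp e.measurable) ?_
  intro x y
  exact H _ _


lemma expansion_step {α : Type*} [MeasurableSpace α] (ν : Measure α) [IsFiniteMeasure ν]
    (φ G : α → ℝ) (hφ : Measurable φ) (hG : Measurable G) (B M : ℝ)
    (hφB : ∀ x, |φ x| ≤ B) (hG0 : ∀ x, 0 ≤ G x) (hGB : ∀ x, G x ≤ B)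
    (H : ∀ ε : ℝ, 0 < ε → 2 * ε * M < 1 →
      (∫ x, Real.exp (ε * φ x) ∂ν) * (∫ x, Real.exp (-(ε * φ x)) ∂ν) ≤
        (∫ x, Real.exp (1 / (2 * (1 - 2 * ε * M)) * ε ^ 2 * G x ^ 2) ∂ν) ^ 2) :
    ν.real univ * (∫ x, φ x ^ 2 ∂ν) - (∫ x, φ x ∂ν) ^ 2 ≤ ν.real univ * ∫ x, G x ^ 2 ∂ν := by
  set Z := ν.real univ with hZ
  set m := ∫ x, φ x ∂ν with hm
  set q := ∫ x, φ x ^ 2 ∂ν with hq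
  set D := ∫ x, G x ^ 2 ∂ν with hD
  have hZ0 : 0 ≤ Z := measureReal_nonneg
  rcases hZ0.eq_or_lt with hZz | hZpos
  · have : ν = 0 := by
      rw [← Measure.measure_univ_eq_zero]
      rw [← hZz, measureReal_def] at hZ
      have := (ENNReal.toReal_eq_zero_iff _).1 hZ.symm
      simpa using this
    rw [← hZz]
    simp only [zero_mul, hm, this, integral_zero_measure]; norm_num
  have hB0 : 0 ≤ B := by
    by_contra h
    have : IsEmpty α := ⟨fun x => by have := (abs_nonneg _).trans (hφB x); linarith⟩
    have : Z = 0 := by rw [hZ]; simp [Set.eq_empty_of_isEmpty]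
    linarith
  have bint : ∀ (f : α → ℝ) (hf : Measurable f) (c : ℝ), (∀ x, |f x| ≤ c) → Integrable f ν :=
    fun f hf c hc => Integrable.of_bound hf.aestronglyMeasurable c (ae_of_all _ hc)
  have iφ : Integrable φ ν := bint φ hφ B hφB
  have iφ2 : Integrable (fun x => φ x ^ 2) ν := bint _ (by fun_prop) (B ^ 2) fun x => by
    rw [abs_pow]; gcongr; exact hφB x
  have iG2 : Integrable (fun x => G x ^ 2) ν := bint _ (by fun_prop) (B ^ 2) fun x => by
    rw [abs_pow, abs_of_nonneg (hG0 x)]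
    exact pow_le_pow_left₀ (hG0 x) (hGB x) 2
  -- lower bound
  have low : ∀ s : ℝ, |s| * B ≤ 1 →
      Z + s * m + s ^ 2 / 2 * q - |s| ^ 3 * B ^ 3 * Z ≤ ∫ x, Real.exp (s * φ x) ∂ν := by
    intro s hs
    have e : Z + s * m + s ^ 2 / 2 * q - |s| ^ 3 * B ^ 3 * Z =
        ∫ x, (1 + s * φ x + s ^ 2 / 2 * φ x ^ 2 - |s| ^ 3 * B ^ 3) ∂ν := by
      rw [integral_sub, integral_add, integral_add, integral_const_mul, integral_const_mul]
      · simp [← hZ]; ring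
      · exact integrable_const _
      · exact iφ.const_mul _
      · exact (integrable_const _).add (iφ.const_mul _)
      · exact iφ2.const_mul _
      · exact ((integrable_const _).add (iφ.const_mul _)).add (iφ2.const_mul _)
      · exact integrable_const _
    have hle : ∀ x, |s * φ x| ≤ |s| * B := fun x => by
      rw [abs_mul]; gcongr; exact hφB x
    rw [e]
    refine integral_mono ?_ ?_ ?_
    · exact (((integrable_const _).add (iφ.const_mul _)).add (iφ2.const_mul _)).sub
        (integrable_const _)
    · refine bint _ (by fun_prop) (Real.exp 1) fun x => ?_
      rw [Real.abs_exp]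
      exact Real.exp_le_exp.2 ((le_abs_self _).trans ((hle x).trans hs))
    · intro x
      have h1 := Real.exp_bound ((hle x).trans hs) (n := 3) (by norm_num)
      have h2 : |s * φ x| ^ 3 ≤ |s| ^ 3 * B ^ 3 := by
        rw [← mul_pow]
        exact pow_le_pow_left₀ (abs_nonneg _) (hle x) 3
      have h3 := (abs_le.1 h1).1
      simp [Finset.sum_range_succ, Nat.factorial] at h3
      have h4 : 0 ≤ |s * φ x| ^ 3 := by positivity
      have h5 : |s * φ x| ^ 3 = (|s| * |φ x|) ^ 3 := by rw [abs_mul]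
      dsimp only
      nlinarith
  have up : ∀ s : ℝ, 0 ≤ s → s * B ^ 2 ≤ 1 →
      ∫ x, Real.exp (s * G x ^ 2) ∂ν ≤ Z + s * D + s ^ 2 * B ^ 4 * Z := by
    intro s hs0 hs
    have e : Z + s * D + s ^ 2 * B ^ 4 * Z =
        ∫ x, (1 + s * G x ^ 2 + s ^ 2 * B ^ 4) ∂ν := by
      rw [integral_add, integral_add, integral_const_mul]
      · simp [← hZ]; ring
      · exact integrable_const _
      · exact iG2.const_mul _
      · exact (integrable_const _).add (iG2.const_mul _)
      · exact integrable_const _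
    have hle : ∀ x, s * G x ^ 2 ≤ s * B ^ 2 := fun x => by
      gcongr; exacts [hG0 x, hGB x]
    have hnn : ∀ x, 0 ≤ s * G x ^ 2 := fun x => by positivity
    rw [e]
    refine integral_mono ?_ ?_ ?_
    · refine bint _ (by fun_prop) (Real.exp 1) fun x => ?_
      rw [Real.abs_exp]
      exact Real.exp_le_exp.2 ((hle x).trans hs)
    · exact (((integrable_const _).add (iG2.const_mul _)).add (integrable_const _))
    · intro x
      have h1 := Real.abs_exp_sub_one_sub_id_le (x := s * G x ^ 2)
        (by rw [abs_of_nonneg (hnn x)]; exact (hle x).trans hs)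
      have h2 : (s * G x ^ 2) ^ 2 ≤ s ^ 2 * B ^ 4 := by
        calc (s * G x ^ 2) ^ 2 ≤ (s * B ^ 2) ^ 2 := pow_le_pow_left₀ (hnn x) (hle x) 2
          _ = _ := by ring
      have h3 := (abs_le.1 h1).2
      dsimp only
      linarith
  set c := B ^ 3 * Z with hc
  have main : ∀ᶠ ε : ℝ in nhdsWithin 0 (Ioi 0),
      Z * q - 2 * Z * ε * c + ε ^ 2 * (q / 2 - ε * c) ^ 2 - m ^ 2 ≤
      2 * Z * (1 / (2 * (1 - 2 * ε * M)) * D + ε ^ 2 * (1 / (2 * (1 - 2 * ε * M))) ^ 2 * (B ^ 4 * Z))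
       + ε ^ 2 * (1 / (2 * (1 - 2 * ε * M)) * D +
          ε ^ 2 * (1 / (2 * (1 - 2 * ε * M))) ^ 2 * (B ^ 4 * Z)) ^ 2 := by
    have t1 : ∀ᶠ ε : ℝ in nhdsWithin 0 (Ioi 0), 2 * ε * M < 1 / 2 := by
      have : ContinuousAt (fun ε : ℝ => 2 * ε * M) 0 := by fun_prop
      exact (this.mono_left nhdsWithin_le_nhds).eventually (gt_mem_nhds (by norm_num))
    have t2 : ∀ᶠ ε : ℝ in nhdsWithin 0 (Ioi 0), ε * B < 1 := by
      have : ContinuousAt (fun ε : ℝ => ε * B) 0 := by fun_prop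
      exact (this.mono_left nhdsWithin_le_nhds).eventually (gt_mem_nhds (by norm_num))
    have t3 : ∀ᶠ ε : ℝ in nhdsWithin 0 (Ioi 0), 0 < Z + ε * m + ε ^ 2 / 2 * q - ε ^ 3 * B ^ 3 * Z := by
      have : ContinuousAt (fun ε : ℝ => Z + ε * m + ε ^ 2 / 2 * q - ε ^ 3 * B ^ 3 * Z) 0 := by fun_prop
      exact (this.mono_left nhdsWithin_le_nhds).eventually (lt_mem_nhds (by simpa using hZpos))
    have t4 : ∀ᶠ ε : ℝ in nhdsWithin 0 (Ioi 0), 0 < Z - ε * m + ε ^ 2 / 2 * q - ε ^ 3 * B ^ 3 * Z := by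
      have : ContinuousAt (fun ε : ℝ => Z - ε * m + ε ^ 2 / 2 * q - ε ^ 3 * B ^ 3 * Z) 0 := by fun_prop
      exact (this.mono_left nhdsWithin_le_nhds).eventually (lt_mem_nhds (by simpa using hZpos))
    filter_upwards [t1, t2, t3, t4, self_mem_nhdsWithin] with ε h1 h2 h3 h4 h5
    have h5 : 0 < ε := h5
    set κ := 1 / (2 * (1 - 2 * ε * M)) with hκ
    have hκ0 : 0 ≤ κ := by rw [hκ]; apply div_nonneg <;> linarith
    have hκ1 : κ ≤ 1 := by rw [hκ, div_le_one] <;> linarith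
    have a1 := low ε (by rw [abs_of_pos h5]; exact h2.le)
    have a2 := low (-ε) (by rw [abs_neg, abs_of_pos h5]; exact h2.le)
    rw [abs_of_pos h5] at a1
    rw [abs_neg, abs_of_pos h5] at a2
    have a3 := up (κ * ε ^ 2) (by positivity) (by
      have : (ε * B) ^ 2 ≤ 1 := pow_le_one₀ (by positivity) h2.le
      nlinarith [mul_nonneg h5.le hB0])
    have a4 := H ε h5 (by linarith)
    simp only [neg_mul] at a2
    have a5 : (Z + ε * m + ε ^ 2 / 2 * q - ε ^ 3 * B ^ 3 * Z) *
        (Z - ε * m + ε ^ 2 / 2 * q - ε ^ 3 * B ^ 3 * Z) ≤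
        (Z + κ * ε ^ 2 * D + (κ * ε ^ 2) ^ 2 * B ^ 4 * Z) ^ 2 := by
      refine le_trans (mul_le_mul a1 (le_trans (le_of_eq (by ring)) a2) h4.le
        (integral_nonneg fun x => (Real.exp_pos _).le)) (a4.trans ?_)
      exact pow_le_pow_left₀ (integral_nonneg fun x => (Real.exp_pos _).le) a3 2
    have h6 : 0 < ε ^ 2 := by positivity
    refine le_of_mul_le_mul_left ?_ h6
    rw [hc]
    nlinarith
  have := le_of_tendsto_of_tendsto (b := nhdsWithin (0:ℝ) (Ioi 0))
    (f := fun ε : ℝ => Z * q - 2 * Z * ε * c + ε ^ 2 * (q / 2 - ε * c) ^ 2 - m ^ 2)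
    (g := fun ε : ℝ => 2 * Z * (1 / (2 * (1 - 2 * ε * M)) * D + ε ^ 2 * (1 / (2 * (1 - 2 * ε * M))) ^ 2 * (B ^ 4 * Z))
       + ε ^ 2 * (1 / (2 * (1 - 2 * ε * M)) * D +
          ε ^ 2 * (1 / (2 * (1 - 2 * ε * M))) ^ 2 * (B ^ 4 * Z)) ^ 2)
    (a₁ := Z * q - m ^ 2) (a₂ := Z * D) ?_ ?_ main
  · exact this
  · have : ContinuousAt (fun ε : ℝ => Z * q - 2 * Z * ε * c + ε ^ 2 * (q / 2 - ε * c) ^ 2 - m ^ 2) 0 := by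
      fun_prop
    have h := this.mono_left (nhdsWithin_le_nhds (s := Ioi (0:ℝ)))
    simpa using h
  · have : ContinuousAt (fun ε : ℝ => 2 * Z * (1 / (2 * (1 - 2 * ε * M)) * D + ε ^ 2 * (1 / (2 * (1 - 2 * ε * M))) ^ 2 * (B ^ 4 * Z))
       + ε ^ 2 * (1 / (2 * (1 - 2 * ε * M)) * D +
          ε ^ 2 * (1 / (2 * (1 - 2 * ε * M))) ^ 2 * (B ^ 4 * Z)) ^ 2) 0 := by
      fun_prop (disch := norm_num)
    have h := this.mono_left (nhdsWithin_le_nhds (s := Ioi (0:ℝ)))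
    have e : Z * D = 2 * Z * (1 / (2 * (1 - 2 * 0 * M)) * D + 0 ^ 2 * (1 / (2 * (1 - 2 * 0 * M))) ^ 2 * (B ^ 4 * Z))
       + 0 ^ 2 * (1 / (2 * (1 - 2 * 0 * M)) * D +
          0 ^ 2 * (1 / (2 * (1 - 2 * 0 * M))) ^ 2 * (B ^ 4 * Z)) ^ 2 := by
      norm_num; ring
    rw [e]
    exact h

/-- Unnormalized Gaussian measure. -/
def gauss (n : ℕ) : Measure (EuclideanSpace ℝ (Fin n)) :=
  volume.withDensity fun x => ENNReal.ofReal (Real.exp (-(‖x‖ ^ 2 / 2)))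

lemma gauss_integrable (n : ℕ) :
    Integrable (fun x : EuclideanSpace ℝ (Fin n) => Real.exp (-(‖x‖ ^ 2 / 2))) := by
  have := (GaussianFourier.integrable_cexp_neg_mul_sq_norm_add (V := EuclideanSpace ℝ (Fin n))
    (b := (1 / 2 : ℂ)) (by norm_num) 0 0).norm
  refine this.congr (ae_of_all _ fun x => ?_)
  simp only [Complex.norm_exp]
  congr 1
  simp [← Complex.ofReal_pow]
  ring

instance (n : ℕ) : IsFiniteMeasure (gauss n) :=
  isFiniteMeasure_withDensity_ofReal (gauss_integrable n).2

lemma pl_gauss (n : ℕ) (C : Set (EuclideanSpace ℝ (Fin n))) (hC : Convex ℝ C)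
    (hCm : MeasurableSet C) (f g h : EuclideanSpace ℝ (Fin n) → ℝ≥0∞) (hf : Measurable f)
    (hg : Measurable g) (hh : Measurable h)
    (H : ∀ z d, f (z + d) * g (z - d) ≤ h z ^ 2 * ENNReal.ofReal (Real.exp (‖d‖ ^ 2))) :
    (∫⁻ x in C, f x ∂gauss n) * (∫⁻ x in C, g x ∂gauss n) ≤ (∫⁻ x in C, h x ∂gauss n) ^ 2 := by
  have hw : Measurable fun x : EuclideanSpace ℝ (Fin n) =>
    ENNReal.ofReal (Real.exp (-(‖x‖ ^ 2 / 2))) := by fun_prop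
  have key : ∀ φ : EuclideanSpace ℝ (Fin n) → ℝ≥0∞, Measurable φ → ∫⁻ x in C, φ x ∂gauss n =
      ∫⁻ x, C.indicator (fun x => ENNReal.ofReal (Real.exp (-(‖x‖ ^ 2 / 2))) * φ x) x := by
    intro φ hφ
    rw [lintegral_indicator hCm, gauss, restrict_withDensity hCm,
      lintegral_withDensity_eq_lintegral_mul _ hw hφ]
    rfl
  rw [key f hf, key g hg, key h hh]
  refine pl_euclidean n _ _ _ ((hw.mul hf).indicator hCm) ((hw.mul hg).indicator hCm)
    ((hw.mul hh).indicator hCm) ?_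
  intro x y
  by_cases hx : x ∈ C
  swap
  · simp [hx]
  by_cases hy : y ∈ C
  swap
  · simp [hy]
  have hz : (1 / 2 : ℝ) • (x + y) ∈ C := by
    rw [smul_add]; exact hC hx hy (by norm_num) (by norm_num) (by norm_num)
  rw [indicator_of_mem hx, indicator_of_mem hy, indicator_of_mem hz]
  set z := (1 / 2 : ℝ) • (x + y) with hzz
  set d := (1 / 2 : ℝ) • (x - y) with hd
  have e1 : x = z + d := by rw [hzz, hd]; module
  have e2 : y = z - d := by rw [hzz, hd]; module
  have hp : ‖x‖ ^ 2 + ‖y‖ ^ 2 = 2 * ‖z‖ ^ 2 + 2 * ‖d‖ ^ 2 := by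
    have := parallelogram_law_with_norm ℝ z d
    rw [e1, e2]; nlinarith
  have H' := H z d
  rw [← e1, ← e2] at H'
  calc ENNReal.ofReal (Real.exp (-(‖x‖ ^ 2 / 2))) * f x *
        (ENNReal.ofReal (Real.exp (-(‖y‖ ^ 2 / 2))) * g y)
      = (ENNReal.ofReal (Real.exp (-(‖x‖ ^ 2 / 2))) * ENNReal.ofReal (Real.exp (-(‖y‖ ^ 2 / 2))))
        * (f x * g y) := by ring
    _ ≤ (ENNReal.ofReal (Real.exp (-(‖x‖ ^ 2 / 2))) * ENNReal.ofReal (Real.exp (-(‖y‖ ^ 2 / 2))))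
        * (h z ^ 2 * ENNReal.ofReal (Real.exp (‖d‖ ^ 2))) := by gcongr
    _ = (ENNReal.ofReal (Real.exp (-(‖z‖ ^ 2 / 2)))) ^ 2 * h z ^ 2 := by
        rw [← ENNReal.ofReal_mul (Real.exp_pos _).le, mul_comm (h z ^ 2), ← mul_assoc,
          ← ENNReal.ofReal_mul (by positivity), ← ENNReal.ofReal_pow (by positivity),
          ← Real.exp_add, ← Real.exp_add, ← Real.exp_nat_mul]
        congr 3
        push_cast
        linarith
    _ = _ := by ring

lemma poincare_smooth (n : ℕ) (C : Set (EuclideanSpace ℝ (Fin n))) (hC : Convex ℝ C)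
    (hCm : MeasurableSet C) (φ : EuclideanSpace ℝ (Fin n) → ℝ) (hφ : ContDiff ℝ 2 φ)
    (hφc : HasCompactSupport φ) :
    (gauss n).real C * (∫ x in C, φ x ^ 2 ∂gauss n) - (∫ x in C, φ x ∂gauss n) ^ 2 ≤
      (gauss n).real C * ∫ x in C, ‖fderiv ℝ φ x‖ ^ 2 ∂gauss n := by
  have hd1 : ContDiff ℝ 1 (fderiv ℝ φ) := hφ.fderiv_right (by norm_num)
  obtain ⟨B1, hB1⟩ := hφc.exists_bound_of_continuous hφ.continuous
  obtain ⟨B2, hB2⟩ := (hφc.fderiv ℝ).exists_bound_of_continuous hd1.continuous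
  obtain ⟨M, hM⟩ := hd1.lipschitzWith_of_hasCompactSupport (hφc.fderiv ℝ) (by norm_num)
  have hdiff : Differentiable ℝ φ := hφ.differentiable (by norm_num)
  have taylor : ∀ z d, φ (z + d) - φ (z - d) ≤ 2 * ‖fderiv ℝ φ z‖ * ‖d‖ + 2 * M * ‖d‖ ^ 2 := by
    intro z d
    have one : ∀ d, |φ (z + d) - φ z - fderiv ℝ φ z d| ≤ M * ‖d‖ ^ 2 := by
      intro d
      have := (convex_closedBall z ‖d‖).norm_image_sub_le_of_norm_hasFDerivWithin_le'
        (f := φ) (f' := fderiv ℝ φ) (φ := fderiv ℝ φ z) (C := M * ‖d‖) (x := z) (y := z + d)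
        (fun x _ => (hdiff x).hasFDerivAt.hasFDerivWithinAt)
        (fun x hx => ?_) (by simp) (by simp)
      · simp only [add_sub_cancel_left] at this
        rw [← Real.norm_eq_abs]
        linarith [this, pow_two ‖d‖, mul_assoc (M:ℝ) ‖d‖ ‖d‖]
      · have h1 := hM.dist_le_mul x z
        rw [dist_eq_norm] at h1
        exact h1.trans (by gcongr; simpa using hx)
    have h1 := (abs_le.1 (one d)).2
    have h2 := (abs_le.1 (one (-d))).1
    rw [norm_neg, map_neg, ← sub_eq_add_neg] at h2
    have h3 := (le_abs_self _).trans ((fderiv ℝ φ z).le_opNorm d)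
    linarith
  have := expansion_step ((gauss n).restrict C) φ (fun x => ‖fderiv ℝ φ x‖)
    hφ.continuous.measurable hd1.continuous.norm.measurable (max B1 B2) M
    (fun x => (hB1 x).trans (le_max_left _ _)) (fun x => norm_nonneg _)
    (fun x => (hB2 x).trans (le_max_right _ _)) ?_
  · simpa using this
  intro ε hε hεM
  set κ := 1 / (2 * (1 - 2 * ε * M)) with hκ
  have hκ0 : 0 ≤ κ := by rw [hκ]; apply div_nonneg <;> linarith
  have cφ := hφ.continuous
  have cd := hd1.continuous
  have pl := pl_gauss n C hC hCm (fun x => ENNReal.ofReal (Real.exp (ε * φ x)))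
    (fun x => ENNReal.ofReal (Real.exp (-(ε * φ x))))
    (fun x => ENNReal.ofReal (Real.exp (κ * ε ^ 2 * ‖fderiv ℝ φ x‖ ^ 2)))
    (by fun_prop) (by fun_prop) (by fun_prop) ?_
  · have ei : ∀ (f : EuclideanSpace ℝ (Fin n) → ℝ), Continuous f → (∃ b, ∀ x, f x ≤ b) →
        ENNReal.ofReal (∫ x in C, Real.exp (f x) ∂gauss n) =
          ∫⁻ x in C, ENNReal.ofReal (Real.exp (f x)) ∂gauss n := by
      rintro f hf ⟨b, hb⟩
      refine ofReal_integral_eq_lintegral_ofReal ?_ (ae_of_all _ fun x => (Real.exp_pos _).le)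
      refine Integrable.of_bound (by fun_prop) (Real.exp b) (ae_of_all _ fun x => ?_)
      rw [Real.norm_eq_abs, Real.abs_exp]
      exact Real.exp_le_exp.2 (hb x)
    rw [← ei _ (by fun_prop) ⟨ε * B1, fun x => ?_⟩, ← ei _ (by fun_prop) ⟨ε * B1, fun x => ?_⟩,
      ← ei _ (by fun_prop) ⟨κ * ε ^ 2 * B2 ^ 2, fun x => ?_⟩,
      ← ENNReal.ofReal_mul (integral_nonneg fun x => (Real.exp_pos _).le),
      ← ENNReal.ofReal_pow (integral_nonneg fun x => (Real.exp_pos _).le)] at pl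
    · exact (ENNReal.ofReal_le_ofReal_iff (by positivity)).1 pl
    · gcongr; exact hB2 x
    · rw [← mul_neg]; gcongr; exact (neg_le_abs _).trans (hB1 x)
    · gcongr; exact (le_abs_self _).trans (hB1 x)
  · intro z d
    rw [← ENNReal.ofReal_mul (by positivity), ← ENNReal.ofReal_pow (by positivity),
      ← ENNReal.ofReal_mul (by positivity), ← Real.exp_add, ← Real.exp_nat_mul, ← Real.exp_add]
    apply ENNReal.ofReal_le_ofReal
    apply Real.exp_le_exp.2
    have t := taylor z d
    set G := ‖fderiv ℝ φ z‖
    set r := ‖d‖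
    have hp : 0 < 1 - 2 * ε * M := by linarith
    have k1 : 2 * ε * G * r - (1 - 2 * ε * M) * r ^ 2 ≤ 2 * (κ * ε ^ 2 * G ^ 2) := by
      have : 2 * (κ * ε ^ 2 * G ^ 2) = ε ^ 2 * G ^ 2 / (1 - 2 * ε * M) := by
        rw [hκ]; field_simp
      rw [this, le_div_iff₀ hp]
      nlinarith [sq_nonneg (ε * G - (1 - 2 * ε * M) * r)]
    have t2 := mul_le_mul_of_nonneg_left t hε.le
    push_cast
    nlinarith


open scoped Convolution in
lemma smoothing (n : ℕ) (g : EuclideanSpace ℝ (Fin n) → ℝ) (hg : Differentiable ℝ g)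
    (hgc : HasCompactSupport g) (hgi : Integrable (fderiv ℝ g))
    (b : ContDiffBump (0 : EuclideanSpace ℝ (Fin n))) (ε : ℝ)
    (hε : ∀ x y, dist x y < b.rOut → dist (g x) (g y) ≤ ε) :
    ∃ ψ : EuclideanSpace ℝ (Fin n) → ℝ, ContDiff ℝ 2 ψ ∧ HasCompactSupport ψ ∧
      (∀ x, dist (ψ x) (g x) ≤ ε) ∧
      ∀ x, ‖fderiv ℝ ψ x‖ₑ ^ 2 ≤
        ∫⁻ t, ENNReal.ofReal (b.normed volume t) * ‖fderiv ℝ g (x - t)‖ₑ ^ 2 := by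
  set η := b.normed volume with hη
  have hηc : HasCompactSupport η := b.hasCompactSupport_normed
  have hηs : ContDiff ℝ 2 η := b.contDiff_normed (n := 2)
  have gcont := hg.continuous
  have gint : Integrable g := gcont.integrable_of_hasCompactSupport hgc
  have hder : ∀ x v, fderiv ℝ (η ⋆[ContinuousLinearMap.lsmul ℝ ℝ, volume] g) x v =
      ∫ t, η t * fderiv ℝ g (x - t) v := by
    intro x v
    have h1 := hηc.hasFDerivAt_convolution_left (ContinuousLinearMap.lsmul ℝ ℝ)
      (hηs.of_le (by norm_num)) gint.locallyIntegrable x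
    rw [h1.fderiv, convolution_def]
    have hηs1 : Continuous (fderiv ℝ η) := hηs.continuous_fderiv (by norm_num)
    obtain ⟨B, hB⟩ := (hηc.fderiv ℝ).exists_bound_of_continuous hηs1
    obtain ⟨B', hB'⟩ := hηc.exists_bound_of_continuous hηs.continuous
    obtain ⟨B'', hB''⟩ := hgc.exists_bound_of_continuous gcont
    have gx : Continuous fun t => g (x - t) := by fun_prop
    have gxint : Integrable fun t => g (x - t) := gint.comp_sub_left x
    have gdint : Integrable fun t => fderiv ℝ g (x - t) := hgi.comp_sub_left x
    have i1 : Integrable fun t => (((ContinuousLinearMap.lsmul ℝ ℝ).precompL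
        (EuclideanSpace ℝ (Fin n))) (fderiv ℝ η t)) (g (x - t)) := by
      refine Continuous.integrable_of_hasCompactSupport (by fun_prop) ?_
      refine (hηc.fderiv ℝ).mono fun t ht => ?_
      simp only [Function.mem_support] at ht ⊢
      contrapose! ht
      simp [ht]
    rw [ContinuousLinearMap.integral_apply i1]
    have hfd : ∀ t, fderiv ℝ (fun t => g (x - t)) t = - fderiv ℝ g (x - t) := by
      intro t
      have h := ((hg (x - t)).hasFDerivAt.comp t ((hasFDerivAt_id t).const_sub x)).fderiv
      refine Eq.trans h ?_
      ext v
      simp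
    have ibp := integral_mul_fderiv_eq_neg_fderiv_mul_of_integrable (μ := volume)
      (f := η) (g := fun t => g (x - t)) (v := v) ?_ ?_ ?_ ?_ ?_
    · simp only [hfd] at ibp
      simp only [neg_apply, mul_neg, integral_neg, neg_inj] at ibp
      rw [ibp]
      rfl
    · refine Continuous.integrable_of_hasCompactSupport (by fun_prop) ?_
      refine (hηc.fderiv ℝ).mono fun t ht => ?_
      simp only [Function.mem_support] at ht ⊢
      contrapose! ht
      simp [ht]
    · simp only [hfd]
      refine Integrable.bdd_mul (c := B') ?_ hηs.continuous.aestronglyMeasurable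
        (ae_of_all _ hB')
      exact (gdint.neg.apply_continuousLinearMap v)
    · exact Integrable.bdd_mul (c := B') gxint hηs.continuous.aestronglyMeasurable
        (ae_of_all _ hB')
    · intro t _; exact hηs.differentiable (by norm_num) t
    · intro t _; fun_prop
  refine ⟨η ⋆[ContinuousLinearMap.lsmul ℝ ℝ, volume] g, ?_, ?_, ?_, ?_⟩
  · exact hηc.contDiff_convolution_left (n := 2) _ hηs gint.locallyIntegrable
  · exact hηc.convolution _ hgc
  · intro x
    exact b.dist_normed_convolution_le gcont.aestronglyMeasurable fun y hy => hε y x hy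
  · intro x
    set u : EuclideanSpace ℝ (Fin n) → ℝ≥0∞ := fun t => ‖fderiv ℝ g (x - t)‖ₑ with hu
    have hum : Measurable u := by
      have := (measurable_fderiv ℝ g).comp (measurable_const.sub measurable_id : Measurable fun t => x - t)
      exact this.enorm
    have hηm : Measurable fun t => ENNReal.ofReal (η t) := by
      have := hηs.continuous; fun_prop
    set π : Measure (EuclideanSpace ℝ (Fin n)) :=
      volume.withDensity fun t => ENNReal.ofReal (η t) with hπ
    have hπ1 : π univ = 1 := by
      rw [hπ, withDensity_apply _ MeasurableSet.univ, Measure.restrict_univ,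
        ← ofReal_integral_eq_lintegral_ofReal b.integrable_normed
          (ae_of_all _ b.nonneg_normed), b.integral_normed]
      simp
    have e1 : ‖fderiv ℝ (η ⋆[ContinuousLinearMap.lsmul ℝ ℝ, volume] g) x‖ₑ ≤ ∫⁻ t, u t ∂π := by
      by_cases hfin : ∫⁻ t, u t ∂π = ∞
      · rw [hfin]; exact le_top
      rw [← ofReal_norm, ← ENNReal.ofReal_toReal hfin]
      apply ENNReal.ofReal_le_ofReal
      refine ContinuousLinearMap.opNorm_le_bound _ ENNReal.toReal_nonneg fun v => ?_
      rw [hder x v]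
      have h2 : ‖∫ t, η t * fderiv ℝ g (x - t) v‖ₑ ≤ (∫⁻ t, u t ∂π) * ‖v‖ₑ := by
        refine (enorm_integral_le_lintegral_enorm _).trans ?_
        rw [hπ, lintegral_withDensity_eq_lintegral_mul _ hηm hum, ← lintegral_mul_const _ (by fun_prop)]
        refine lintegral_mono fun t => ?_
        simp only [Pi.mul_apply, enorm_mul, hu]
        rw [Real.enorm_of_nonneg (b.nonneg_normed t), mul_assoc]
        gcongr
        exact ContinuousLinearMap.le_opENorm _ _
      have h3 := ENNReal.toReal_mono (ENNReal.mul_ne_top hfin (by simp)) h2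
      simpa using h3
    have e2 : (∫⁻ t, u t ∂π) ^ 2 ≤ ∫⁻ t, u t ^ 2 ∂π := by
      have := ENNReal.lintegral_mul_le_Lp_mul_Lq π (p := 2) (q := 2)
        (by rw [Real.holderConjugate_iff]; norm_num) (f := u) (g := fun _ => 1)
        hum.aemeasurable (by fun_prop)
      simp only [Pi.mul_apply, mul_one, ENNReal.one_rpow, lintegral_const, hπ1] at this
      calc (∫⁻ t, u t ∂π) ^ 2 ≤ ((∫⁻ t, u t ^ (2:ℝ) ∂π) ^ (1 / 2 : ℝ)) ^ 2 := by gcongr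
        _ = ∫⁻ t, u t ^ (2:ℝ) ∂π := by
            rw [← ENNReal.rpow_natCast, ← ENNReal.rpow_mul]; norm_num
        _ = _ := by simp
    calc _ ≤ (∫⁻ t, u t ∂π) ^ 2 := by gcongr
      _ ≤ ∫⁻ t, u t ^ 2 ∂π := e2
      _ = _ := by
        rw [hπ, lintegral_withDensity_eq_lintegral_mul _ hηm (by fun_prop)]
        rfl


lemma exists_cutoff (n : ℕ) (C : Set (EuclideanSpace ℝ (Fin n))) (hC : IsCompact C)
    (δ : ℝ) (hδ : 0 < δ) :
    ∃ χ : EuclideanSpace ℝ (Fin n) → ℝ, ContDiff ℝ 1 χ ∧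
      tsupport χ ⊆ Metric.cthickening δ C ∧ ∀ x ∈ Metric.thickening (δ / 2) C, χ x = 1 := by
  have hd : Disjoint (Metric.thickening δ C)ᶜ (Metric.cthickening (δ / 2) C) := by
    rw [disjoint_compl_left_iff_subset]
    exact Metric.cthickening_subset_thickening' hδ (by linarith) _
  obtain ⟨χ, h0, h1, h2⟩ := exists_contMDiffMap_zero_one_of_isClosed
    (n := (1 : ℕ∞)) (modelWithCornersSelf ℝ (EuclideanSpace ℝ (Fin n)))
    Metric.isOpen_thickening.isClosed_compl Metric.isClosed_cthickening hd
  refine ⟨χ, ?_, ?_, ?_⟩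
  · exact contMDiff_iff_contDiff.1 χ.contMDiff
  · refine closure_minimal (fun x hx => ?_) Metric.isClosed_cthickening
    by_contra hx'
    exact hx (h0 fun h => hx' (Metric.thickening_subset_cthickening _ _ h))
  · intro x hx
    exact h1 (Metric.thickening_subset_cthickening _ _ hx)

lemma approx (n : ℕ) (K C : Set (EuclideanSpace ℝ (Fin n))) (hK : IsOpen K) (hC : IsCompact C)
    (hCK : C ⊆ K) (f : EuclideanSpace ℝ (Fin n) → ℝ) (hf : DifferentiableOn ℝ f K)
    (hEnergy : ∫⁻ x in K, ‖fderiv ℝ f x‖ₑ ^ 2 ∂gauss n ≠ ∞) (η : ℝ) (hη : 0 < η) :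
    ∃ ψ : EuclideanSpace ℝ (Fin n) → ℝ, ContDiff ℝ 2 ψ ∧ HasCompactSupport ψ ∧
      (∀ x ∈ C, |ψ x - f x| ≤ η) ∧
      ∫⁻ x in C, ‖fderiv ℝ ψ x‖ₑ ^ 2 ∂gauss n ≤
        ENNReal.ofReal (1 + η) * ∫⁻ x in K, ‖fderiv ℝ f x‖ₑ ^ 2 ∂gauss n := by
  have hw : Measurable fun x : EuclideanSpace ℝ (Fin n) =>
    ENNReal.ofReal (Real.exp (-(‖x‖ ^ 2 / 2))) := by fun_prop
  have hf'm : Measurable fun x => ‖fderiv ℝ f x‖ₑ ^ 2 := (measurable_fderiv ℝ f).enorm.pow_const 2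
  have hγ : ∀ (s : Set (EuclideanSpace ℝ (Fin n))), MeasurableSet s →
      ∀ φ : EuclideanSpace ℝ (Fin n) → ℝ≥0∞, Measurable φ → ∫⁻ x in s, φ x ∂gauss n =
      ∫⁻ x in s, ENNReal.ofReal (Real.exp (-(‖x‖ ^ 2 / 2))) * φ x := by
    intro s hs φ hφ
    rw [gauss, restrict_withDensity hs, lintegral_withDensity_eq_lintegral_mul _ hw hφ]
    rfl
  obtain ⟨δ, hδ, hδK⟩ := hC.exists_cthickening_subset_open hK hCK
  obtain ⟨χ, hχ, hχs, hχ1⟩ := exists_cutoff n C hC δ hδ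
  have hTK : tsupport χ ⊆ K := hχs.trans hδK
  have hTc : IsCompact (tsupport χ) :=
    (hC.cthickening (r := δ)).of_isClosed_subset (isClosed_tsupport χ) hχs
  have hfd : ∀ x ∈ K, DifferentiableAt ℝ f x := fun x hx => hf.differentiableAt (hK.mem_nhds hx)
  set g : EuclideanSpace ℝ (Fin n) → ℝ := fun x => χ x * f x with hg
  have hχd : Differentiable ℝ χ := hχ.differentiable (by norm_num)
  have hout : ∀ x, x ∉ tsupport χ → g =ᶠ[nhds x] fun _ => 0 := by
    intro x hx
    filter_upwards [(isClosed_tsupport χ).isOpen_compl.mem_nhds hx] with y hy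
    simp [hg, image_eq_zero_of_notMem_tsupport hy]
  have hgd : Differentiable ℝ g := by
    intro x
    by_cases hx : x ∈ tsupport χ
    · exact (hχd x).mul (hfd x (hTK hx))
    · exact (hout x hx).differentiableAt_iff.2 (by fun_prop)
  have hgc : HasCompactSupport g := by
    refine HasCompactSupport.intro hTc fun x hx => ?_
    simp [hg, image_eq_zero_of_notMem_tsupport hx]
  have hgf : ∀ x ∈ Metric.thickening (δ / 2) C, fderiv ℝ g x = fderiv ℝ f x := by
    intro x hx
    apply Filter.EventuallyEq.fderiv_eq
    filter_upwards [Metric.isOpen_thickening.mem_nhds hx] with y hy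
    simp [hg, hχ1 y hy]
  have hgfC : ∀ x ∈ C, g x = f x := by
    intro x hx
    simp [hg, hχ1 x (Metric.self_subset_thickening (by linarith) C hx)]
  -- integrability of the derivative
  have hgi : Integrable (fderiv ℝ g) := by
    refine ⟨(measurable_fderiv ℝ g).aestronglyMeasurable, ?_⟩
    have hχ' : Continuous (fderiv ℝ χ) := hχ.continuous_fderiv (by norm_num)
    obtain ⟨B, hB⟩ := hTc.exists_bound_of_continuousOn hχ'.continuousOn
    obtain ⟨B1, hB1⟩ := hTc.exists_bound_of_continuousOn (f := χ) hχ.continuous.continuousOn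
    obtain ⟨B2, hB2⟩ := hTc.exists_bound_of_continuousOn (f := f)
      ((hf.continuousOn).mono hTK)
    obtain ⟨R, hR⟩ := hTc.isBounded.exists_norm_le
    set A : ℝ≥0∞ := ENNReal.ofReal (max B2 0 * max B 0)
    set A1 : ℝ≥0∞ := ENNReal.ofReal (max B1 0)
    have hle : ∀ x ∈ tsupport χ, ‖fderiv ℝ g x‖ₑ ≤ A + A1 + A1 *
        (ENNReal.ofReal (Real.exp (R ^ 2 / 2)) *
        (ENNReal.ofReal (Real.exp (-(‖x‖ ^ 2 / 2))) * ‖fderiv ℝ f x‖ₑ ^ 2)) := by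
      intro x hx
      have e : fderiv ℝ g x = χ x • fderiv ℝ f x + f x • fderiv ℝ χ x :=
        fderiv_mul (hχd x) (hfd x (hTK hx))
      have h1 : ‖χ x‖ₑ ≤ A1 := by
        rw [← ofReal_norm]; exact ENNReal.ofReal_le_ofReal ((hB1 x hx).trans (le_max_left _ _))
      have h2 : ‖f x • fderiv ℝ χ x‖ₑ ≤ A := by
        rw [← ofReal_norm, norm_smul]; apply ENNReal.ofReal_le_ofReal
        gcongr
        · exact (hB2 x hx).trans (le_max_left _ _)
        · exact (hB x hx).trans (le_max_left _ _)
      have h3 : (1 : ℝ≥0∞) ≤ ENNReal.ofReal (Real.exp (R ^ 2 / 2)) *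
          ENNReal.ofReal (Real.exp (-(‖x‖ ^ 2 / 2))) := by
        rw [← ENNReal.ofReal_mul (by positivity), ← Real.exp_add]
        rw [ENNReal.one_le_ofReal]
        apply Real.one_le_exp
        have := hR x hx
        have := norm_nonneg x
        nlinarith
      have h4 : ∀ u : ℝ≥0∞, u ≤ 1 + u ^ 2 := by
        intro u
        rcases le_total u 1 with h | h
        · exact h.trans (by simp)
        · calc u = u * 1 := by simp
            _ ≤ u * u := by gcongr
            _ = u ^ 2 := by ring
            _ ≤ _ := by simp
      rw [e]
      calc ‖χ x • fderiv ℝ f x + f x • fderiv ℝ χ x‖ₑ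
          ≤ ‖χ x • fderiv ℝ f x‖ₑ + ‖f x • fderiv ℝ χ x‖ₑ := by
            simp only [← ofReal_norm]
            rw [← ENNReal.ofReal_add (norm_nonneg _) (norm_nonneg _)]
            exact ENNReal.ofReal_le_ofReal (norm_add_le _ _)
        _ ≤ A1 * (1 + 1 * ‖fderiv ℝ f x‖ₑ ^ 2) + A := by
            rw [enorm_smul, one_mul]
            gcongr
            exact h4 _
        _ ≤ A1 * (1 + (ENNReal.ofReal (Real.exp (R ^ 2 / 2)) *
          ENNReal.ofReal (Real.exp (-(‖x‖ ^ 2 / 2)))) * ‖fderiv ℝ f x‖ₑ ^ 2) + A := by gcongr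
        _ = _ := by ring
    have hzero : ∀ x, x ∉ tsupport χ → fderiv ℝ g x = 0 := by
      intro x hx
      rw [(hout x hx).fderiv_eq]; simp
    have hTm : MeasurableSet (tsupport χ) := (isClosed_tsupport χ).measurableSet
    calc ∫⁻ x, ‖fderiv ℝ g x‖ₑ = ∫⁻ x in tsupport χ, ‖fderiv ℝ g x‖ₑ := by
          rw [← lintegral_indicator hTm]
          congr 1
          ext x
          by_cases hx : x ∈ tsupport χ
          · simp [hx]
          · rw [indicator_of_notMem hx, hzero x hx, ← ofReal_norm]; simp
      _ ≤ ∫⁻ x in tsupport χ, (A + A1 + A1 *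
        (ENNReal.ofReal (Real.exp (R ^ 2 / 2)) *
        (ENNReal.ofReal (Real.exp (-(‖x‖ ^ 2 / 2))) * ‖fderiv ℝ f x‖ₑ ^ 2))) :=
          setLIntegral_mono' hTm hle
      _ = (A + A1) * volume (tsupport χ) + A1 * (ENNReal.ofReal (Real.exp (R ^ 2 / 2)) *
          ∫⁻ x in tsupport χ, ‖fderiv ℝ f x‖ₑ ^ 2 ∂gauss n) := by
          rw [hγ _ hTm _ hf'm, lintegral_add_left measurable_const,
            lintegral_const_mul _ (by fun_prop), lintegral_const_mul _ (by fun_prop)]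
          simp
      _ < ∞ := by
          refine ENNReal.add_lt_top.2 ⟨ENNReal.mul_lt_top (ENNReal.add_lt_top.2
            ⟨ENNReal.ofReal_lt_top, ENNReal.ofReal_lt_top⟩) hTc.measure_lt_top,
            ENNReal.mul_lt_top (by simp [A1]) (ENNReal.mul_lt_top (by simp) ?_)⟩
          exact lt_of_le_of_lt (lintegral_mono_set hTK) hEnergy.lt_top
  -- choice of the scale
  obtain ⟨R, hR⟩ := hC.isBounded.exists_norm_le
  have huc := (hgc.uniformContinuous_of_continuous hgd.continuous)
  obtain ⟨r, hr, hru⟩ := Metric.uniformContinuous_iff.1 huc η hη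
  have hexp : ∀ᶠ ε : ℝ in nhdsWithin 0 (Ioi 0), Real.exp (R * ε + ε ^ 2 / 2) < 1 + η := by
    have : ContinuousAt (fun ε : ℝ => Real.exp (R * ε + ε ^ 2 / 2)) 0 := by fun_prop
    exact (this.mono_left nhdsWithin_le_nhds).eventually (gt_mem_nhds (by simpa using hη))
  have hsm : ∀ᶠ ε : ℝ in nhdsWithin 0 (Ioi 0), ε < min r (δ / 2) :=
    nhdsWithin_le_nhds (gt_mem_nhds (by positivity))
  obtain ⟨ε, hε1, hε2, hε0⟩ := (hexp.and (hsm.and self_mem_nhdsWithin)).exists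
  have hε0 : 0 < ε := hε0
  let b : ContDiffBump (0 : EuclideanSpace ℝ (Fin n)) := ⟨ε / 2, ε, by positivity, by linarith⟩
  obtain ⟨ψ, p1, p2, p3, p4⟩ := smoothing n g hgd hgc hgi b η (fun x y hxy =>
    (hru (lt_trans hxy (hε2.trans_le (min_le_left _ _)))).le)
  refine ⟨ψ, p1, p2, fun x hx => ?_, ?_⟩
  · have := p3 x
    rwa [hgfC x hx, Real.dist_eq] at this
  have hCm : MeasurableSet C := hC.isClosed.measurableSet
  have hg'm : Measurable fun x => ‖fderiv ℝ g x‖ₑ ^ 2 := (measurable_fderiv ℝ g).enorm.pow_const 2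
  have hηm : Measurable fun t => ENNReal.ofReal (b.normed volume t) := by
    have := (b.contDiff_normed (n := 0) (μ := volume)).continuous
    fun_prop
  have hη1 : ∫⁻ t, ENNReal.ofReal (b.normed volume t) = 1 := by
    rw [← ofReal_integral_eq_lintegral_ofReal b.integrable_normed
          (ae_of_all _ b.nonneg_normed), b.integral_normed]
    simp
  have hsub : Measurable fun p : EuclideanSpace ℝ (Fin n) × EuclideanSpace ℝ (Fin n) =>
      ‖fderiv ℝ g (p.1 - p.2)‖ₑ ^ 2 := hg'm.comp (measurable_fst.sub measurable_snd)
  have inner : ∀ t, ‖t‖ < ε →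
      ∫⁻ x in C, ‖fderiv ℝ g (x - t)‖ₑ ^ 2 ∂gauss n ≤
        ENNReal.ofReal (1 + η) * ∫⁻ x in K, ‖fderiv ℝ f x‖ₑ ^ 2 ∂gauss n := by
    intro t ht
    have hm1 : Measurable fun x => ‖fderiv ℝ g (x - t)‖ₑ ^ 2 :=
      hg'm.comp (measurable_id.sub_const t)
    have hm2 : Measurable (K.indicator fun x : EuclideanSpace ℝ (Fin n) =>
        ENNReal.ofReal (Real.exp (-(‖x‖ ^ 2 / 2))) * ‖fderiv ℝ f x‖ₑ ^ 2) :=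
      (hw.mul hf'm).indicator hK.measurableSet
    rw [hγ _ hCm _ hm1, hγ _ hK.measurableSet _ hf'm, ← lintegral_indicator hCm,
      ← lintegral_indicator hK.measurableSet, ← lintegral_const_mul _ hm2, ← lintegral_add_right_eq_self _ t]
    refine lintegral_mono fun x => ?_
    by_cases hx : x + t ∈ C
    · have hxt : x ∈ Metric.thickening (δ / 2) C := by
        rw [Metric.mem_thickening_iff]
        refine ⟨x + t, hx, ?_⟩
        rw [dist_eq_norm]
        simpa using ht.trans (hε2.trans_le (min_le_right _ _))
      have hxK : x ∈ K := hδK (Metric.thickening_subset_cthickening_of_le (by linarith) _ hxt)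
      rw [indicator_of_mem hx, indicator_of_mem hxK, add_sub_cancel_right, hgf x hxt, ← mul_assoc]
      gcongr
      rw [← ENNReal.ofReal_mul (by positivity)]
      apply ENNReal.ofReal_le_ofReal
      refine le_trans ?_ (mul_le_mul_of_nonneg_right hε1.le (Real.exp_pos _).le)
      rw [← Real.exp_add]
      apply Real.exp_le_exp.2
      have h1 : ‖x‖ ≤ ‖x + t‖ + ‖t‖ := by
        have := norm_sub_le (x + t) t
        simpa using this
      have h2 := hR _ hx
      have h3 : ‖x‖ ^ 2 ≤ (‖x + t‖ + ‖t‖) ^ 2 := pow_le_pow_left₀ (norm_nonneg _) h1 2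
      have h4 := norm_nonneg (x + t)
      have h5 := norm_nonneg t
      have h6 : ‖x + t‖ * ‖t‖ ≤ R * ε := mul_le_mul h2 ht.le h5 (h4.trans h2)
      have h7 : ‖t‖ ^ 2 ≤ ε ^ 2 := pow_le_pow_left₀ h5 ht.le 2
      nlinarith
    · simp [hx]
  calc ∫⁻ x in C, ‖fderiv ℝ ψ x‖ₑ ^ 2 ∂gauss n
      ≤ ∫⁻ x in C, (∫⁻ t, ENNReal.ofReal (b.normed volume t) *
          ‖fderiv ℝ g (x - t)‖ₑ ^ 2) ∂gauss n :=
        lintegral_mono fun x => p4 x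
    _ = ∫⁻ t, ∫⁻ x in C, ENNReal.ofReal (b.normed volume t) *
          ‖fderiv ℝ g (x - t)‖ₑ ^ 2 ∂gauss n := by
        rw [lintegral_lintegral_swap]
        exact ((hηm.comp measurable_snd).mul hsub).aemeasurable
    _ = ∫⁻ t, ENNReal.ofReal (b.normed volume t) *
          ∫⁻ x in C, ‖fderiv ℝ g (x - t)‖ₑ ^ 2 ∂gauss n := by
        congr 1
        ext t
        have hm : Measurable fun x => ‖fderiv ℝ g (x - t)‖ₑ ^ 2 :=
          hg'm.comp (measurable_id.sub_const t)
        rw [lintegral_const_mul _ hm]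
    _ ≤ ∫⁻ t, ENNReal.ofReal (b.normed volume t) *
          (ENNReal.ofReal (1 + η) * ∫⁻ x in K, ‖fderiv ℝ f x‖ₑ ^ 2 ∂gauss n) := by
        refine lintegral_mono fun t => ?_
        by_cases ht : ‖t‖ < ε
        · dsimp only
          gcongr
          exact inner t ht
        · have : b.normed volume t = 0 := by
            have h : t ∉ Function.support (b.normed volume) := by
              rw [b.support_normed_eq]
              simpa [b] using ht
            simpa using h
          simp [this]
    _ = _ := by
        rw [lintegral_mul_const _ hηm, hη1, one_mul]


lemma poincare_compact (n : ℕ) (K C : Set (EuclideanSpace ℝ (Fin n))) (hK : IsOpen K)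
    (hC : IsCompact C) (hCc : Convex ℝ C)
    (hCK : C ⊆ K) (f : EuclideanSpace ℝ (Fin n) → ℝ) (hf : DifferentiableOn ℝ f K)
    (hEnergy : ∫⁻ x in K, ‖fderiv ℝ f x‖ₑ ^ 2 ∂gauss n ≠ ∞) :
    (gauss n).real C * (∫ x in C, f x ^ 2 ∂gauss n) - (∫ x in C, f x ∂gauss n) ^ 2 ≤
      (gauss n).real C * (∫⁻ x in K, ‖fderiv ℝ f x‖ₑ ^ 2 ∂gauss n).toReal := by
  have hCm : MeasurableSet C := hC.isClosed.measurableSet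
  set D := ∫⁻ x in K, ‖fderiv ℝ f x‖ₑ ^ 2 ∂gauss n with hD
  have hη : ∀ k : ℕ, (0 : ℝ) < 1 / ((k : ℝ) + 1) := fun k => by positivity
  choose ψ h1 h2 h3 h4 using fun k : ℕ => approx n K C hK hC hCK f hf hEnergy _ (hη k)
  have hlim : Filter.Tendsto (fun k : ℕ => 1 / ((k : ℝ) + 1)) Filter.atTop (nhds 0) :=
    tendsto_one_div_add_atTop_nhds_zero_nat
  obtain ⟨M, hM⟩ := hC.exists_bound_of_continuousOn (hf.continuousOn.mono hCK)
  have hpt : ∀ x ∈ C, Filter.Tendsto (fun k => ψ k x) Filter.atTop (nhds (f x)) := by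
    intro x hx
    rw [tendsto_iff_dist_tendsto_zero]
    exact squeeze_zero (fun _ => dist_nonneg) (fun k => by
      rw [Real.dist_eq]; exact h3 k x hx) hlim
  have hbd : ∀ k, ∀ x ∈ C, |ψ k x| ≤ M + 1 := by
    intro k x hx
    have a := h3 k x hx
    have b := hM x hx
    rw [Real.norm_eq_abs] at b
    have c : 1 / ((k : ℝ) + 1) ≤ 1 := by
      rw [div_le_one (by positivity)]
      have : (0 : ℝ) ≤ k := by positivity
      linarith
    have := abs_sub_abs_le_abs_sub (ψ k x) (f x)
    linarith
  have t1 : Filter.Tendsto (fun k => ∫ x in C, ψ k x ∂gauss n) Filter.atTop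
      (nhds (∫ x in C, f x ∂gauss n)) := by
    refine tendsto_integral_of_dominated_convergence (fun _ => M + 1)
      (fun k => (h1 k).continuous.aestronglyMeasurable) (integrable_const _) (fun k => ?_) ?_
    · filter_upwards [ae_restrict_mem hCm] with x hx using hbd k x hx
    · filter_upwards [ae_restrict_mem hCm] with x hx using hpt x hx
  have t2 : Filter.Tendsto (fun k => ∫ x in C, ψ k x ^ 2 ∂gauss n) Filter.atTop
      (nhds (∫ x in C, f x ^ 2 ∂gauss n)) := by
    refine tendsto_integral_of_dominated_convergence (fun _ => (M + 1) ^ 2)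
      (fun k => ((h1 k).continuous.pow 2).aestronglyMeasurable) (integrable_const _)
      (fun k => ?_) ?_
    · filter_upwards [ae_restrict_mem hCm] with x hx
      rw [norm_pow, Real.norm_eq_abs]
      exact pow_le_pow_left₀ (abs_nonneg _) (hbd k x hx) 2
    · filter_upwards [ae_restrict_mem hCm] with x hx using (hpt x hx).pow 2
  have t3 : Filter.Tendsto (fun k : ℕ => (gauss n).real C * ((1 + 1 / ((k : ℝ) + 1)) * D.toReal))
      Filter.atTop (nhds ((gauss n).real C * ((1 + 0) * D.toReal))) :=
    ((hlim.const_add 1).mul_const _).const_mul _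
  rw [add_zero, one_mul] at t3
  refine le_of_tendsto_of_tendsto' ((t2.const_mul _).sub (t1.pow 2)) t3 fun k => ?_
  refine (poincare_smooth n C hCc hCm (ψ k) (h1 k) (h2 k)).trans ?_
  refine mul_le_mul_of_nonneg_left ?_ measureReal_nonneg
  have hc : Continuous fun x => ‖fderiv ℝ (ψ k) x‖ ^ 2 :=
    ((h1 k).continuous_fderiv (by norm_num)).norm.pow 2
  rw [integral_eq_lintegral_of_nonneg_ae (ae_of_all _ fun x => by positivity)
    hc.aestronglyMeasurable]
  have e : ∀ x, ENNReal.ofReal (‖fderiv ℝ (ψ k) x‖ ^ 2) = ‖fderiv ℝ (ψ k) x‖ₑ ^ 2 := by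
    intro x
    rw [ENNReal.ofReal_pow (norm_nonneg _), ofReal_norm]
  simp only [e]
  refine (ENNReal.toReal_mono (ENNReal.mul_ne_top ENNReal.ofReal_ne_top hEnergy) (h4 k)).trans ?_
  rw [ENNReal.toReal_mul, ENNReal.toReal_ofReal (by positivity)]

lemma poincare_convex (n : ℕ) (K : Set (EuclideanSpace ℝ (Fin n))) (hK : IsOpen K)
    (hKc : Convex ℝ K) (f : EuclideanSpace ℝ (Fin n) → ℝ) (hf : DifferentiableOn ℝ f K)
    (hf1 : IntegrableOn f K (gauss n)) (hf2 : IntegrableOn (fun x => f x ^ 2) K (gauss n))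
    (hEnergy : ∫⁻ x in K, ‖fderiv ℝ f x‖ₑ ^ 2 ∂gauss n ≠ ∞) :
    (gauss n).real K * (∫ x in K, f x ^ 2 ∂gauss n) - (∫ x in K, f x ∂gauss n) ^ 2 ≤
      (gauss n).real K * (∫⁻ x in K, ‖fderiv ℝ f x‖ₑ ^ 2 ∂gauss n).toReal := by
  set T : ℕ → Set (EuclideanSpace ℝ (Fin n)) :=
    fun j => (Metric.thickening (1 / ((j : ℝ) + 1)) Kᶜ)ᶜ with hT
  set C : ℕ → Set (EuclideanSpace ℝ (Fin n)) := fun j => T j ∩ Metric.closedBall 0 j with hCd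
  have hTmem : ∀ j x, x ∈ T j ↔ Metric.ball x (1 / ((j : ℝ) + 1)) ⊆ K := by
    intro j x
    simp only [hT, mem_compl_iff, Metric.mem_thickening_iff, not_exists, not_and, subset_def,
      Metric.mem_ball]
    constructor
    · intro h y hy
      by_contra hyK
      exact h y hyK (by rwa [dist_comm])
    · intro h y hyK hd
      exact hyK (h y (by rwa [dist_comm]))
  have hcomp : ∀ j, IsCompact (C j) := fun j =>
    (isCompact_closedBall _ _).inter_left Metric.isOpen_thickening.isClosed_compl
  have hconv : ∀ j, Convex ℝ (C j) := by
    intro j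
    refine Convex.inter ?_ (convex_closedBall _ _)
    intro x hx y hy a b ha hb hab
    rw [hTmem] at *
    intro z hz
    set v := z - (a • x + b • y) with hv
    have hvn : ‖v‖ < 1 / ((j : ℝ) + 1) := by rwa [Metric.mem_ball, dist_eq_norm] at hz
    have e : z = a • (x + v) + b • (y + v) := by
      have : z = (a • x + b • y) + (a + b) • v := by rw [hab, one_smul, hv]; abel
      rw [this, add_smul, smul_add, smul_add]; abel
    rw [e]
    exact hKc (hx (by simpa using hvn)) (hy (by simpa using hvn)) ha hb hab
  have hsub : ∀ j, C j ⊆ K := fun j x hx =>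
    (hTmem j x).1 hx.1 (Metric.mem_ball_self (by positivity))
  have hmono : Monotone C := by
    intro i j hij x hx
    refine ⟨?_, Metric.closedBall_subset_closedBall (by exact_mod_cast hij) hx.2⟩
    have := hx.1
    rw [hTmem] at *
    refine (Metric.ball_subset_ball ?_).trans this
    have : (i : ℝ) ≤ j := by exact_mod_cast hij
    gcongr
  have hunion : ⋃ j, C j = K := by
    refine subset_antisymm (iUnion_subset hsub) fun x hx => ?_
    obtain ⟨ε, hε, hb⟩ := Metric.isOpen_iff.1 hK x hx
    obtain ⟨i, hi⟩ := exists_nat_one_div_lt hε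
    obtain ⟨m, hm⟩ := exists_nat_ge ‖x‖
    refine mem_iUnion.2 ⟨max i m, (hTmem _ _).2 ((Metric.ball_subset_ball ?_).trans hb), ?_⟩
    · refine le_trans ?_ hi.le
      have : (i : ℝ) ≤ (max i m : ℕ) := by exact_mod_cast le_max_left _ _
      gcongr
    · rw [mem_closedBall_zero_iff]
      exact hm.trans (by exact_mod_cast le_max_right _ _)
  have hm : ∀ j, MeasurableSet (C j) := fun j => (hcomp j).isClosed.measurableSet
  have t0 : Filter.Tendsto (fun j => (gauss n).real (C j)) Filter.atTop
      (nhds ((gauss n).real K)) := by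
    have := tendsto_measure_iUnion_atTop (μ := gauss n) hmono
    rw [hunion] at this
    exact (ENNReal.tendsto_toReal (measure_ne_top _ _)).comp this
  have t1 := tendsto_setIntegral_of_monotone (f := f) hm hmono (by rwa [hunion])
  have t2 := tendsto_setIntegral_of_monotone (f := fun x => f x ^ 2) hm hmono (by rwa [hunion])
  rw [hunion] at t1 t2
  exact le_of_tendsto_of_tendsto' ((t0.mul t2).sub (t1.pow 2)) (t0.mul_const _) fun j =>
    poincare_compact n K (C j) hK (hcomp j) (hconv j) (hsub j) f hf hEnergy


lemma uniform_unique {X : Type*} [MetricSpace X] [SecondCountableTopology X] [MeasurableSpace X]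
    [BorelSpace X] (μ ν : Measure X) [IsFiniteMeasure μ] [IsFiniteMeasure ν]
    (hμ : ∀ x y r, μ (Metric.ball x r) = μ (Metric.ball y r))
    (hν : ∀ x y r, ν (Metric.ball x r) = ν (Metric.ball y r)) (hν0 : ν ≠ 0) :
    μ = (μ univ / ν univ) • ν := by
  have hνu : ν univ ≠ 0 := by simpa using hν0
  have hne : Nonempty X := by
    by_contra h
    rw [not_nonempty_iff] at h
    exact hνu (by rw [univ_eq_empty_iff.2 h]; simp)
  obtain ⟨x0⟩ := hne
  have hb : ∀ r, 0 < r → ν (Metric.ball x0 r) ≠ 0 := by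
    intro r hr h
    refine hνu (measure_null_of_locally_null _ fun x _ => ⟨Metric.ball x r, ?_, ?_⟩)
    · simpa using Metric.ball_mem_nhds x hr
    · rw [hν x x0, h]
  have hmS : ∀ (r : ℝ) (U : Set X), IsOpen U →
      MeasurableSet {p : X × X | p.2 ∈ U ∧ dist p.2 p.1 < r} := by
    intro r U hU
    exact ((hU.preimage continuous_snd).inter
      (isOpen_lt (continuous_snd.dist continuous_fst) continuous_const)).measurableSet
  have hmeas : ∀ (r : ℝ) (U : Set X), IsOpen U →
      Measurable fun x => ν (U ∩ Metric.ball x r) := by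
    intro r U hU
    exact measurable_measure_prodMk_left (hmS r U hU)
  have key : ∀ (r : ℝ) (U : Set X), IsOpen U →
      ∫⁻ x, ν (U ∩ Metric.ball x r) ∂μ = μ (Metric.ball x0 r) * ν U := by
    intro r U hU
    have e1 := Measure.prod_apply (μ := μ) (ν := ν) (hmS r U hU)
    have e2 := Measure.prod_apply_symm (μ := μ) (ν := ν) (hmS r U hU)
    have e3 : ∫⁻ x, ν (U ∩ Metric.ball x r) ∂μ =
      (μ.prod ν) {p : X × X | p.2 ∈ U ∧ dist p.2 p.1 < r} := e1.symm
    rw [e3, e2]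
    have : ∀ y, μ ((fun x => (x, y)) ⁻¹' {p : X × X | p.2 ∈ U ∧ dist p.2 p.1 < r}) =
        U.indicator (fun _ => μ (Metric.ball x0 r)) y := by
      intro y
      by_cases hy : y ∈ U
      · rw [indicator_of_mem hy, ← hμ y x0]
        congr 1
        ext x
        simp [hy, dist_comm]
      · rw [indicator_of_notMem hy]
        simp [hy]
    simp only [this]
    rw [lintegral_indicator hU.measurableSet]
    simp
  have tot : ∀ r, 0 < r → μ (Metric.ball x0 r) / ν (Metric.ball x0 r) = μ univ / ν univ := by
    intro r hr
    have := key r univ isOpen_univ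
    simp only [univ_inter, hν _ x0 r, lintegral_const] at this
    rw [ENNReal.div_eq_div_iff hνu (measure_ne_top _ _) (hb r hr) (measure_ne_top _ _), this, mul_comm]
  have hopen : ∀ U : Set X, IsOpen U → μ U ≤ μ univ / ν univ * ν U := by
    intro U hU
    calc μ U = ∫⁻ x, U.indicator (fun _ => 1) x ∂μ := by
          rw [lintegral_indicator hU.measurableSet]; simp
      _ ≤ ∫⁻ x, Filter.liminf (fun k : ℕ => (ν (Metric.ball x0 (1 / ((k : ℝ) + 1))))⁻¹ *
            ν (U ∩ Metric.ball x (1 / ((k : ℝ) + 1)))) Filter.atTop ∂μ := by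
          refine lintegral_mono fun x => ?_
          by_cases hx : x ∈ U
          · rw [indicator_of_mem hx]
            refine Filter.le_liminf_of_le (by isBoundedDefault) ?_
            obtain ⟨ε, hε, hεU⟩ := Metric.isOpen_iff.1 hU x hx
            have hl : ∀ᶠ k : ℕ in Filter.atTop, 1 / ((k : ℝ) + 1) < ε :=
              (tendsto_one_div_add_atTop_nhds_zero_nat (𝕜 := ℝ)).eventually (gt_mem_nhds hε)
            filter_upwards [hl] with k hk
            rw [inter_eq_self_of_subset_right ((Metric.ball_subset_ball hk.le).trans hεU), hν x x0,
              ENNReal.inv_mul_cancel (hb _ (by positivity)) (measure_ne_top _ _)]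
          · simp [hx]
      _ ≤ Filter.liminf (fun k : ℕ => ∫⁻ x, (ν (Metric.ball x0 (1 / ((k : ℝ) + 1))))⁻¹ *
            ν (U ∩ Metric.ball x (1 / ((k : ℝ) + 1))) ∂μ) Filter.atTop :=
          lintegral_liminf_le fun k => (hmeas _ U hU).const_mul _
      _ = Filter.liminf (fun k : ℕ => μ univ / ν univ * ν U) Filter.atTop := by
          congr 1
          ext k
          rw [lintegral_const_mul _ (hmeas _ U hU), key _ U hU,
            ← tot (1 / ((k : ℝ) + 1)) (by positivity), ENNReal.div_eq_inv_mul, mul_assoc]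
      _ = _ := by simp
  have hc : μ univ / ν univ ≠ ∞ := ENNReal.div_ne_top (measure_ne_top _ _) hνu
  have : IsFiniteMeasure ((μ univ / ν univ) • ν) := ⟨by
    rw [Measure.smul_apply, smul_eq_mul]
    exact ENNReal.mul_lt_top hc.lt_top (measure_lt_top _ _)⟩
  refine Measure.eq_of_le_of_measure_univ_eq ?_ ?_
  · refine Measure.le_iff.2 fun s _ => ?_
    rw [s.measure_eq_iInf_isOpen ((μ univ / ν univ) • ν)]
    refine le_iInf₂ fun U hsU => le_iInf fun hU => ?_
    exact (measure_mono hsU).trans (by simpa using hopen U hU)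
  · rw [Measure.smul_apply, smul_eq_mul, ENNReal.div_mul_cancel hνu (measure_ne_top _ _)]

lemma hausdorff_sphere_finite (n : ℕ) (hn : 1 ≤ n) :
    IsFiniteMeasure (μH[(n : ℝ) - 1] : Measure (Metric.sphere (0 : EuclideanSpace ℝ (Fin n)) 1)) := by
  obtain ⟨m, rfl⟩ : ∃ m, n = m + 1 := ⟨n - 1, by omega⟩
  have hdim : Fact (Module.finrank ℝ (EuclideanSpace ℝ (Fin (m + 1))) = m + 1) := ⟨by simp⟩
  have hd : ((m + 1 : ℕ) : ℝ) - 1 = m := by push_cast; ring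
  rw [hd]
  have hloc : IsLocallyFiniteMeasure
      (μH[(m : ℝ)] : Measure (Metric.sphere (0 : EuclideanSpace ℝ (Fin (m + 1))) 1)) := by
    refine ⟨fun x => ?_⟩
    set v := -x with hv
    have hvn : ‖(v : EuclideanSpace ℝ (Fin (m + 1)))‖ = 1 := norm_eq_of_mem_sphere v
    have hv0 : (v : EuclideanSpace ℝ (Fin (m + 1))) ≠ 0 := fun h => by simp [h] at hvn
    set e := stereographic hvn with he
    have hxv : (v : EuclideanSpace ℝ (Fin (m + 1))) ≠ x := by
      intro h
      have h' : -(x : EuclideanSpace ℝ (Fin (m + 1))) = x := h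
      have h2 : (2 : ℝ) • (x : EuclideanSpace ℝ (Fin (m + 1))) = 0 := by
        rw [two_smul]; nth_rewrite 1 [← h']; simp
      have h0 : (x : EuclideanSpace ℝ (Fin (m + 1))) = 0 := by simpa using h2
      have := norm_eq_of_mem_sphere x
      simp [h0] at this
    have hx : e x = 0 := stereographic_neg_apply x
    have hsrc : x ∈ e.source := by
      rw [he, stereographic_source]
      intro h
      exact hxv (by rw [h])
    have hsx : e.symm 0 = x := by rw [← hx, e.left_inv hsrc]
    have hcd : ContDiff ℝ 1 (fun w : (Submodule.span ℝ {(v : EuclideanSpace ℝ (Fin (m + 1)))})ᗮ =>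
        stereoInvFunAux (v : EuclideanSpace ℝ (Fin (m + 1))) w) :=
      contDiff_stereoInvFunAux.comp
        ((Submodule.span ℝ {(v : EuclideanSpace ℝ (Fin (m + 1)))})ᗮ).subtypeL.contDiff
    obtain ⟨L, t, ht, hL⟩ := (hcd.contDiffAt (x := 0)).exists_lipschitzOnWith
    have hL' : LipschitzOnWith L e.symm t := fun a ha b hb => hL ha hb
    refine ⟨e.symm '' (t ∩ Metric.closedBall 0 1), ?_, ?_⟩
    · rw [← hsx]
      exact e.symm.image_mem_nhds (by simp [he])
        (Filter.inter_mem ht (Metric.closedBall_mem_nhds _ one_pos))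
    · refine lt_of_le_of_lt ((hL'.mono inter_subset_left).hausdorffMeasure_image_le (by positivity)) ?_
      refine ENNReal.mul_lt_top ?_ ?_
      · exact ENNReal.rpow_lt_top_of_nonneg (by positivity) ENNReal.coe_ne_top
      · refine lt_of_le_of_lt (measure_mono inter_subset_right) ?_
        have hf := Submodule.finrank_orthogonal_span_singleton (𝕜 := ℝ) (n := m) hv0
        have : (m : ℝ) = (Module.finrank ℝ
          (Submodule.span ℝ {(v : EuclideanSpace ℝ (Fin (m + 1)))})ᗮ : ℝ) := by rw [hf]
        rw [this]
        exact (isCompact_closedBall _ _).measure_lt_top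
  exact ⟨isCompact_univ.measure_lt_top⟩

lemma sphere_rotate (n : ℕ) (x y : Metric.sphere (0 : EuclideanSpace ℝ (Fin n)) 1) :
    ∃ e : EuclideanSpace ℝ (Fin n) ≃ₗᵢ[ℝ] EuclideanSpace ℝ (Fin n), e x = y :=
  ⟨_, Submodule.reflection_sub (by rw [norm_eq_of_mem_sphere x, norm_eq_of_mem_sphere y])⟩

def sphereIso (n : ℕ) (e : EuclideanSpace ℝ (Fin n) ≃ₗᵢ[ℝ] EuclideanSpace ℝ (Fin n)) :
    Metric.sphere (0 : EuclideanSpace ℝ (Fin n)) 1 ≃ᵢ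
      Metric.sphere (0 : EuclideanSpace ℝ (Fin n)) 1 where
  toFun x := ⟨e x, by simp⟩
  invFun x := ⟨e.symm x, by simp⟩
  left_inv x := by ext1; simp
  right_inv x := by ext1; simp
  isometry_toFun := fun a b => by
    rw [Subtype.edist_eq, Subtype.edist_eq]; exact e.isometry a b

open scoped Pointwise in
lemma hausdorff_sphere (n : ℕ) (hn : 1 ≤ n) : ∃ c : ℝ≥0∞, c ≠ ∞ ∧
    (μH[(n : ℝ) - 1] : Measure (EuclideanSpace ℝ (Fin n))).restrict (Metric.sphere 0 1) =
      c • (Measure.map Subtype.val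
        (volume : Measure (EuclideanSpace ℝ (Fin n))).toSphere) := by
  have hd : (0 : ℝ) ≤ (n : ℝ) - 1 := by
    have : (1 : ℝ) ≤ n := by exact_mod_cast hn
    linarith
  have := hausdorff_sphere_finite n hn
  have : Nonempty (Fin n) := ⟨⟨0, by omega⟩⟩
  set ν := (volume : Measure (EuclideanSpace ℝ (Fin n))).toSphere with hν
  have hν0 : ν ≠ 0 := Measure.toSphere_ne_zero _
  have h1 : ∀ (x y : Metric.sphere (0 : EuclideanSpace ℝ (Fin n)) 1) r,
      (μH[(n : ℝ) - 1]) (Metric.ball x r) = (μH[(n : ℝ) - 1]) (Metric.ball y r) := by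
    intro x y r
    obtain ⟨e, he⟩ := sphere_rotate n x y
    have hy : sphereIso n e x = y := by ext1; exact he
    rw [← hy, ← IsometryEquiv.image_ball, IsometryEquiv.hausdorffMeasure_image]
  have h2 : ∀ (x y : Metric.sphere (0 : EuclideanSpace ℝ (Fin n)) 1) r,
      ν (Metric.ball x r) = ν (Metric.ball y r) := by
    intro x y r
    obtain ⟨e, he⟩ := sphere_rotate n x y
    have hy : sphereIso n e x = y := by ext1; exact he
    rw [hν, Measure.toSphere_apply' _ Metric.isOpen_ball.measurableSet,
      Measure.toSphere_apply' _ Metric.isOpen_ball.measurableSet, ← hy, ← IsometryEquiv.image_ball]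
    congr 1
    have : (Ioo (0 : ℝ) 1 • (Subtype.val '' (sphereIso n e '' Metric.ball x r)) :
        Set (EuclideanSpace ℝ (Fin n))) =
        e.symm ⁻¹' (Ioo (0 : ℝ) 1 • (Subtype.val '' (Metric.ball x r))) := by
      rw [← LinearIsometryEquiv.image_eq_preimage_symm]
      ext z
      simp only [mem_smul, mem_image]
      constructor
      · rintro ⟨s, hs, _, ⟨_, ⟨w, hw, rfl⟩, rfl⟩, rfl⟩
        exact ⟨s • w, ⟨s, hs, w, ⟨w, hw, rfl⟩, rfl⟩, map_smul e s _⟩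
      · rintro ⟨_, ⟨s, hs, _, ⟨w, hw, rfl⟩, rfl⟩, rfl⟩
        exact ⟨s, hs, e w, ⟨sphereIso n e w, ⟨w, hw, rfl⟩, rfl⟩, by simp⟩
    rw [this]
    exact (e.symm.measurePreserving.measure_preimage_equiv (f := e.symm.toMeasurableEquiv) _).symm
  have hu := uniform_unique μH[(n : ℝ) - 1] ν h1 h2 hν0
  have hνu : ν univ ≠ 0 := by simpa using hν0
  refine ⟨(μH[(n : ℝ) - 1] : Measure (Metric.sphere (0 : EuclideanSpace ℝ (Fin n)) 1)) univ /
    ν univ, ENNReal.div_ne_top (measure_ne_top _ _) hνu, ?_⟩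
  rw [← Measure.map_smul, ← hu, isometry_subtype_coe.map_hausdorffMeasure (Or.inl hd),
    Subtype.range_coe]


def mom (j : ℕ) : ℝ := ∫ r in Ioi (0 : ℝ), r ^ j * Real.exp (-(r ^ 2 / 2))

lemma mom_integrable (j : ℕ) :
    IntegrableOn (fun r : ℝ => r ^ j * Real.exp (-(r ^ 2 / 2))) (Ioi 0) := by
  have := integrableOn_rpow_mul_exp_neg_mul_sq (b := 1 / 2) (by norm_num) (s := j)
    (by have : (0 : ℝ) ≤ j := by positivity
        linarith)
  refine this.congr_fun (fun r _ => ?_) measurableSet_Ioi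
  simp only [Real.rpow_natCast]
  congr 2
  ring

lemma mom_eq (j : ℕ) : mom j = (1 / 2 : ℝ) ^ (-((j : ℝ) + 1) / 2) * (1 / 2) *
    Real.Gamma (((j : ℝ) + 1) / 2) := by
  have := integral_rpow_mul_exp_neg_mul_rpow (p := 2) (q := j) (b := 1 / 2) (by norm_num)
    (by have : (0 : ℝ) ≤ j := by positivity
        linarith) (by norm_num)
  rw [← this, mom]
  refine setIntegral_congr_fun measurableSet_Ioi fun r _ => ?_
  simp only [Real.rpow_natCast, Real.rpow_two]
  congr 2
  ring

lemma mom_pos (j : ℕ) : 0 < mom j := by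
  rw [mom_eq]
  have := Real.Gamma_pos_of_pos (s := ((j : ℝ) + 1) / 2) (by positivity)
  positivity

lemma mom_succ (j : ℕ) : mom (j + 2) = ((j : ℝ) + 1) * mom j := by
  rw [mom_eq, mom_eq]
  have e1 : (((j + 2 : ℕ) : ℝ) + 1) / 2 = ((j : ℝ) + 1) / 2 + 1 := by push_cast; ring
  have e2 : -(((j + 2 : ℕ) : ℝ) + 1) / 2 = -((j : ℝ) + 1) / 2 + (-1) := by push_cast; ring
  rw [e1, e2, Real.Gamma_add_one (by positivity), Real.rpow_add (by norm_num), Real.rpow_neg_one]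
  ring

lemma radial (m k : ℕ) :
    Integrable (fun r : Ioi (0 : ℝ) => r.1 ^ k * Real.exp (-(r.1 ^ 2 / 2)))
      (Measure.volumeIoiPow m) ∧
    ∫ r : Ioi (0 : ℝ), r.1 ^ k * Real.exp (-(r.1 ^ 2 / 2)) ∂(Measure.volumeIoiPow m) =
      mom (m + k) := by
  have e : ∀ r : Ioi (0 : ℝ), (ENNReal.ofReal (r.1 ^ m)).toReal •
      (r.1 ^ k * Real.exp (-(r.1 ^ 2 / 2))) = r.1 ^ (m + k) * Real.exp (-(r.1 ^ 2 / 2)) := by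
    intro r
    have : (0 : ℝ) < r.1 := r.2
    rw [ENNReal.toReal_ofReal (by positivity), smul_eq_mul]
    ring
  have hm : Measurable fun r : Ioi (0 : ℝ) => ENNReal.ofReal (r.1 ^ m) := by fun_prop
  constructor
  · rw [Measure.volumeIoiPow, integrable_withDensity_iff_integrable_smul' hm
      (ae_of_all _ fun _ => ENNReal.ofReal_lt_top)]
    simp only [e]
    exact (integrableOn_iff_comap_subtypeVal measurableSet_Ioi).1 (mom_integrable (m + k))
  · rw [Measure.volumeIoiPow, integral_withDensity_eq_integral_toReal_smul hm
      (ae_of_all _ fun _ => ENNReal.ofReal_lt_top)]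
    simp only [e]
    exact integral_subtype_comap measurableSet_Ioi
      (fun r : ℝ => r ^ (m + k) * Real.exp (-(r ^ 2 / 2)))

lemma polar (n : ℕ) (hn : 1 ≤ n) (ω K : Set (EuclideanSpace ℝ (Fin n)))
    (hK : K = {x | x ≠ 0 ∧ ‖x‖⁻¹ • x ∈ ω}) (hKm : MeasurableSet K) (hω : MeasurableSet ω)
    (g h : EuclideanSpace ℝ (Fin n) → ℝ) (k : ℕ)
    (hgh : ∀ x ∈ K, g x = ‖x‖ ^ k * h (‖x‖⁻¹ • x))
    (hh : Integrable h ((Measure.map Subtype.val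
        (volume : Measure (EuclideanSpace ℝ (Fin n))).toSphere).restrict ω)) :
    IntegrableOn g K (gauss n) ∧ ∫ x in K, g x ∂gauss n = mom (n - 1 + k) *
      ∫ θ, h θ ∂((Measure.map Subtype.val
        (volume : Measure (EuclideanSpace ℝ (Fin n))).toSphere).restrict ω) := by
  have : Nonempty (Fin n) := ⟨⟨0, by omega⟩⟩
  have hemb : MeasurableEmbedding (Subtype.val : Metric.sphere (0 : EuclideanSpace ℝ (Fin n)) 1 →
    EuclideanSpace ℝ (Fin n)) := MeasurableEmbedding.subtype_coe Metric.isClosed_sphere.measurableSet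
  set σ := (volume : Measure (EuclideanSpace ℝ (Fin n))).toSphere with hσ
  have hmp := (volume : Measure (EuclideanSpace ℝ (Fin n))).measurePreserving_homeomorphUnitSphereProd
  have hfr : Module.finrank ℝ (EuclideanSpace ℝ (Fin n)) - 1 = n - 1 := by simp
  rw [hfr, ← hσ] at hmp
  obtain ⟨r1, r2⟩ := radial (n - 1) k
  -- the function on the sphere
  set hs : Metric.sphere (0 : EuclideanSpace ℝ (Fin n)) 1 → ℝ :=
    fun θ => ω.indicator h θ.1 with hhs
  have hs1 : Integrable hs σ := by
    have := (integrable_indicator_iff hω).2 hh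
    exact (hemb.integrable_map_iff).1 this
  have hs2 : ∫ θ, hs θ ∂σ = ∫ θ, h θ ∂((Measure.map Subtype.val σ).restrict ω) := by
    rw [← integral_indicator hω, hemb.integral_map]
  set G : Metric.sphere (0 : EuclideanSpace ℝ (Fin n)) 1 × Ioi (0 : ℝ) → ℝ :=
    fun p => hs p.1 * (p.2.1 ^ k * Real.exp (-(p.2.1 ^ 2 / 2))) with hG
  have G1 : Integrable G (σ.prod (Measure.volumeIoiPow (n - 1))) := hs1.mul_prod r1
  have G2 : ∫ p, G p ∂(σ.prod (Measure.volumeIoiPow (n - 1))) = (∫ θ, hs θ ∂σ) * mom (n - 1 + k) := by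
    rw [← r2]
    exact integral_prod_mul (μ := σ) (ν := Measure.volumeIoiPow (n - 1)) hs
      (fun r : Ioi (0 : ℝ) => r.1 ^ k * Real.exp (-(r.1 ^ 2 / 2)))
  have hw : Measurable fun x : EuclideanSpace ℝ (Fin n) =>
    ENNReal.ofReal (Real.exp (-(‖x‖ ^ 2 / 2))) := by fun_prop
  have e : ∀ x : ({0}ᶜ : Set (EuclideanSpace ℝ (Fin n))),
      G (homeomorphUnitSphereProd (EuclideanSpace ℝ (Fin n)) x) =
      (ENNReal.ofReal (Real.exp (-(‖x.1‖ ^ 2 / 2)))).toReal • K.indicator g x.1 := by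
    intro x
    have hx : x.1 ≠ 0 := x.2
    rw [ENNReal.toReal_ofReal (Real.exp_pos _).le, smul_eq_mul]
    simp only [hG, hhs, homeomorphUnitSphereProd_apply_fst_coe,
      homeomorphUnitSphereProd_apply_snd_coe]
    by_cases hxω : ‖x.1‖⁻¹ • x.1 ∈ ω
    · have hxK : x.1 ∈ K := by rw [hK]; exact ⟨hx, hxω⟩
      rw [indicator_of_mem hxω, indicator_of_mem hxK, hgh _ hxK]
      ring
    · have hxK : x.1 ∉ K := by rw [hK]; exact fun h => hxω h.2
      rw [indicator_of_notMem hxω, indicator_of_notMem hxK]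
      simp
  constructor
  · rw [← integrable_indicator_iff hKm, gauss, integrable_withDensity_iff_integrable_smul' hw
      (ae_of_all _ fun _ => ENNReal.ofReal_lt_top), ← restrict_compl_singleton (μ := volume) 0,
      ← IntegrableOn, integrableOn_iff_comap_subtypeVal (by measurability)]
    refine ((hmp.integrable_comp_emb (Homeomorph.measurableEmbedding _)).2 G1).congr ?_
    exact ae_of_all _ e
  · rw [← integral_indicator hKm, gauss, integral_withDensity_eq_integral_toReal_smul hw
      (ae_of_all _ fun _ => ENNReal.ofReal_lt_top), ← restrict_compl_singleton (μ := volume) 0,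
      ← integral_subtype_comap (measurableSet_singleton _).compl
        (fun x => (ENNReal.ofReal (Real.exp (-(‖x‖ ^ 2 / 2)))).toReal • K.indicator g x)]
    simp only [← e]
    rw [hmp.integral_comp (Homeomorph.measurableEmbedding _), G2, hs2, mul_comm]


lemma deriv_homog (n : ℕ) (Φ : EuclideanSpace ℝ (Fin n) → ℝ) (x : EuclideanSpace ℝ (Fin n))
    (hx : x ≠ 0)
    (hd : DifferentiableAt ℝ (fun x => Φ (‖x‖⁻¹ • x)) x)
    (hd' : DifferentiableAt ℝ (fun x => Φ (‖x‖⁻¹ • x)) (‖x‖⁻¹ • x)) :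
    DifferentiableAt ℝ (fun x => ‖x‖ * Φ (‖x‖⁻¹ • x)) x ∧
    ‖fderiv ℝ (fun x => ‖x‖ * Φ (‖x‖⁻¹ • x)) x‖ ^ 2 = Φ (‖x‖⁻¹ • x) ^ 2 +
      ‖gradient (fun x => Φ (‖x‖⁻¹ • x)) (‖x‖⁻¹ • x)‖ ^ 2 := by
  set F : EuclideanSpace ℝ (Fin n) → ℝ := fun x => Φ (‖x‖⁻¹ • x) with hF
  have hn : 0 < ‖x‖ := norm_pos_iff.2 hx
  set θ := ‖x‖⁻¹ • x with hθ
  have hθn : ‖θ‖ = 1 := by rw [hθ, norm_smul, norm_inv, norm_norm, inv_mul_cancel₀ hn.ne']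
  have hhom : ∀ c : ℝ, 0 < c → ∀ z, F (c • z) = F z := by
    intro c hc z
    simp only [hF]
    congr 1
    rw [norm_smul, Real.norm_of_nonneg hc.le, smul_smul]
    congr 1
    rw [mul_inv, mul_comm c⁻¹, mul_assoc, inv_mul_cancel₀ hc.ne', mul_one]
  set G := gradient F θ with hG
  have hGθ : HasFDerivAt F (InnerProductSpace.toDual ℝ _ G) θ := hd'.hasGradientAt.hasFDerivAt
  have hFx : HasFDerivAt F (‖x‖⁻¹ • (InnerProductSpace.toDual ℝ _ G)) x := by
    have h1 : HasFDerivAt (fun z : EuclideanSpace ℝ (Fin n) => ‖x‖⁻¹ • z)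
      (‖x‖⁻¹ • ContinuousLinearMap.id ℝ _) x := (hasFDerivAt_id x).const_smul ‖x‖⁻¹
    have h2 : HasFDerivAt (F ∘ fun z : EuclideanSpace ℝ (Fin n) => ‖x‖⁻¹ • z) _ x :=
      HasFDerivAt.comp x hGθ h1
    have h3 : (F ∘ fun z : EuclideanSpace ℝ (Fin n) => ‖x‖⁻¹ • z) = F := by
      ext z
      exact hhom _ (by positivity) z
    rw [h3] at h2
    refine h2.congr_fderiv (ContinuousLinearMap.ext fun v => ?_)
    simp
  have hNx : HasFDerivAt (fun z : EuclideanSpace ℝ (Fin n) => ‖z‖)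
      (InnerProductSpace.toDual ℝ _ θ) x := by
    have h1 := (hasStrictFDerivAt_norm_sq x).hasFDerivAt.sqrt (by positivity)
    have h2 : (fun z : EuclideanSpace ℝ (Fin n) => √(‖z‖ ^ 2)) = fun z => ‖z‖ := by
      ext z; exact Real.sqrt_sq (norm_nonneg z)
    rw [h2] at h1
    refine h1.congr_fderiv (ContinuousLinearMap.ext fun v => ?_)
    simp [hθ, Real.sqrt_sq (norm_nonneg x), inner_smul_left]
    ring
  have hor : inner ℝ G θ = 0 := by
    have h1 : HasDerivAt (fun t : ℝ => t • θ) θ 1 := by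
      simpa using (hasDerivAt_id (1 : ℝ)).smul_const θ
    have h2 : HasDerivAt (F ∘ fun t : ℝ => t • θ) (InnerProductSpace.toDual ℝ _ G θ) 1 := by
      refine HasFDerivAt.comp_hasDerivAt (1 : ℝ) ?_ h1
      rwa [one_smul]
    have h3 : (F ∘ fun t : ℝ => t • θ) =ᶠ[nhds 1] fun _ => F θ := by
      filter_upwards [lt_mem_nhds (zero_lt_one' ℝ)] with t ht
      exact hhom t ht θ
    have h4 := (h2.congr_of_eventuallyEq h3.symm).unique (hasDerivAt_const (1 : ℝ) (F θ))
    simpa using h4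
  have hf : HasFDerivAt (fun z => ‖z‖ * F z) (InnerProductSpace.toDual ℝ _ (G + Φ θ • θ)) x := by
    refine (hNx.mul hFx).congr_fderiv (ContinuousLinearMap.ext fun v => ?_)
    have : F x = Φ θ := rfl
    simp only [map_add, map_smul, ContinuousLinearMap.add_apply, ContinuousLinearMap.smul_apply,
      smul_eq_mul, this]
    field_simp
  refine ⟨hf.differentiableAt, ?_⟩
  rw [hf.fderiv, LinearIsometryEquiv.norm_map, norm_add_sq_real, inner_smul_right, hor, norm_smul,
    hθn, mul_one, Real.norm_eq_abs, sq_abs]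
  ring

lemma sphere_bound (n : ℕ) (hn : 2 ≤ n) (ω K : Set (EuclideanSpace ℝ (Fin n)))
    (hne : ω.Nonempty) (hω : ∀ x ∈ ω, ‖x‖ = 1)
    (hK : K = {x | x ≠ 0 ∧ ‖x‖⁻¹ • x ∈ ω})
    (hKopen : IsOpen K) (hKconv : Convex ℝ K) (hωm : MeasurableSet ω)
    (Φ : EuclideanSpace ℝ (Fin n) → ℝ)
    (hd : DifferentiableOn ℝ (fun x => Φ (‖x‖⁻¹ • x)) K)
    (τ : Measure (EuclideanSpace ℝ (Fin n)))
    (hτ : τ = (Measure.map Subtype.val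
        (volume : Measure (EuclideanSpace ℝ (Fin n))).toSphere).restrict ω)
    (h1 : Integrable Φ τ) (h2 : Integrable (fun θ => Φ θ ^ 2) τ)
    (h3 : Integrable (fun θ => ‖gradient (fun x => Φ (‖x‖⁻¹ • x)) θ‖ ^ 2) τ)
    (h0 : ∫ θ, Φ θ ∂τ = 0) :
    ((n : ℝ) - 1) * ∫ θ, Φ θ ^ 2 ∂τ ≤
      ∫ θ, ‖gradient (fun x => Φ (‖x‖⁻¹ • x)) θ‖ ^ 2 ∂τ := by
  subst hτ
  set τ := (Measure.map Subtype.val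
        (volume : Measure (EuclideanSpace ℝ (Fin n))).toSphere).restrict ω with hτ
  set f : EuclideanSpace ℝ (Fin n) → ℝ := fun x => ‖x‖ * Φ (‖x‖⁻¹ • x) with hf
  have hωK : ω ⊆ K := by
    intro x hx
    have := hω x hx
    rw [hK]
    refine ⟨fun h => by simp [h] at this, ?_⟩
    rwa [this, inv_one, one_smul]
  have hdat : ∀ x ∈ K, DifferentiableAt ℝ (fun x => Φ (‖x‖⁻¹ • x)) x :=
    fun x hx => hd.differentiableAt (hKopen.mem_nhds hx)
  have hKx : ∀ x ∈ K, x ≠ 0 ∧ ‖x‖⁻¹ • x ∈ ω := fun x hx => by rwa [hK] at hx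
  have D := fun x (hx : x ∈ K) => deriv_homog n Φ x (hKx x hx).1 (hdat x hx)
    (hdat _ (hωK (hKx x hx).2))
  have hKm := hKopen.measurableSet
  obtain ⟨a1, b1⟩ := polar n (by omega) ω K hK hKm hωm f Φ 1 (fun x _ => by simp [hf]) h1
  obtain ⟨a2, b2⟩ := polar n (by omega) ω K hK hKm hωm (fun x => f x ^ 2) (fun x => Φ x ^ 2) 2
    (fun x _ => by simp only [hf]; ring) h2
  obtain ⟨a3, b3⟩ := polar n (by omega) ω K hK hKm hωm (fun x => ‖fderiv ℝ f x‖ ^ 2)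
    (fun θ => Φ θ ^ 2 + ‖gradient (fun x => Φ (‖x‖⁻¹ • x)) θ‖ ^ 2) 0
    (fun x hx => by rw [pow_zero, one_mul]; exact (D x hx).2) (h2.add h3)
  rw [integral_add h2 h3] at b3
  have e : ∀ x, ENNReal.ofReal (‖fderiv ℝ f x‖ ^ 2) = ‖fderiv ℝ f x‖ₑ ^ 2 := by
    intro x
    rw [ENNReal.ofReal_pow (norm_nonneg _), ofReal_norm]
  have hl : ∫⁻ x in K, ‖fderiv ℝ f x‖ₑ ^ 2 ∂gauss n =
      ENNReal.ofReal (∫ x in K, ‖fderiv ℝ f x‖ ^ 2 ∂gauss n) := by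
    rw [ofReal_integral_eq_lintegral_ofReal a3 (ae_of_all _ fun x => by positivity)]
    simp only [e]
  have P := poincare_convex n K hKopen hKconv f (fun x hx => (D x hx).1.differentiableWithinAt)
    a1 a2 (by rw [hl]; exact ENNReal.ofReal_ne_top)
  rw [hl, ENNReal.toReal_ofReal (integral_nonneg fun x => by positivity), b1, h0, b2, b3] at P
  have hZ : 0 < (gauss n).real K := by
    rw [measureReal_def]
    refine ENNReal.toReal_pos (fun hz => ?_) (measure_ne_top _ _)
    have hac : (volume : Measure (EuclideanSpace ℝ (Fin n))) ≪ gauss n := by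
      refine withDensity_absolutelyContinuous' (by fun_prop) (ae_of_all _ fun x => ?_)
      simp [Real.exp_pos]
    exact hKopen.measure_ne_zero volume (hne.mono hωK) (hac hz)
  have hms : mom (n - 1 + 2) = n * mom (n - 1) := by
    rw [mom_succ]
    congr 1
    have : 1 ≤ n := by omega
    push_cast [Nat.cast_sub this]
    ring
  rw [hms, add_zero] at P
  have hm0 := mom_pos (n - 1)
  have P2 : (n : ℝ) * mom (n - 1) * ∫ θ, Φ θ ^ 2 ∂τ ≤ mom (n - 1) * (∫ θ, Φ θ ^ 2 ∂τ +
      ∫ θ, ‖gradient (fun x => Φ (‖x‖⁻¹ • x)) θ‖ ^ 2 ∂τ) := by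
    refine le_of_mul_le_mul_left ?_ hZ
    linarith
  have P3 : (n : ℝ) * ∫ θ, Φ θ ^ 2 ∂τ ≤ ∫ θ, Φ θ ^ 2 ∂τ +
      ∫ θ, ‖gradient (fun x => Φ (‖x‖⁻¹ • x)) θ‖ ^ 2 ∂τ := by
    refine le_of_mul_le_mul_left ?_ hm0
    linarith
  linarith

theorem hemisphere_eigenvalue_bound (n : ℕ) (hn : 2 ≤ n)
    (ω : Set (EuclideanSpace ℝ (Fin n)))
    (hω : ω ⊆ {x : EuclideanSpace ℝ (Fin n) | ‖x‖ = 1 ∧ 0 < x ⟨n - 1, by omega⟩})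
    (hne : ω.Nonempty)
    (K : Set (EuclideanSpace ℝ (Fin n)))
    (hK : K = {x | x ≠ 0 ∧ ‖x‖⁻¹ • x ∈ ω})
    (hKopen : IsOpen K) (hKconv : Convex ℝ K) :
    ∀ Φ : EuclideanSpace ℝ (Fin n) → ℝ,
      DifferentiableOn ℝ (fun x => Φ (‖x‖⁻¹ • x)) K →
      Integrable Φ ((μH[(n : ℝ) - 1]).restrict ω) →
      Integrable (fun θ => Φ θ ^ 2) ((μH[(n : ℝ) - 1]).restrict ω) →
      Integrable (fun θ => ‖gradient (fun x => Φ (‖x‖⁻¹ • x)) θ‖ ^ 2)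
        ((μH[(n : ℝ) - 1]).restrict ω) →
      (∫ θ, Φ θ ∂((μH[(n : ℝ) - 1]).restrict ω)) = 0 →
      ((n : ℝ) - 1) * ∫ θ, Φ θ ^ 2 ∂((μH[(n : ℝ) - 1]).restrict ω) ≤
        ∫ θ, ‖gradient (fun x => Φ (‖x‖⁻¹ • x)) θ‖ ^ 2
          ∂((μH[(n : ℝ) - 1]).restrict ω) := by
  intro Φ hd h1 h2 h3 h0
  have hω1 : ∀ x ∈ ω, ‖x‖ = 1 := fun x hx => (hω hx).1
  have hωe : ω = K ∩ Metric.sphere 0 1 := by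
    ext x
    rw [hK, mem_inter_iff, mem_setOf_eq, mem_sphere_zero_iff_norm]
    constructor
    · intro hx
      have := hω1 x hx
      exact ⟨⟨fun h => by simp [h] at this, by rwa [this, inv_one, one_smul]⟩, this⟩
    · rintro ⟨⟨_, hx⟩, hx1⟩
      rwa [hx1, inv_one, one_smul] at hx
  have hωm : MeasurableSet ω := by
    rw [hωe]
    exact hKopen.measurableSet.inter Metric.isClosed_sphere.measurableSet
  obtain ⟨c, hc, hμ⟩ := hausdorff_sphere n (by omega)
  have hres : (μH[(n : ℝ) - 1] : Measure (EuclideanSpace ℝ (Fin n))).restrict ω =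
      c • (Measure.map Subtype.val
        (volume : Measure (EuclideanSpace ℝ (Fin n))).toSphere).restrict ω := by
    rw [← Measure.restrict_smul, ← hμ, Measure.restrict_restrict hωm, inter_eq_self_of_subset_left]
    intro x hx
    simpa using hω1 x hx
  rw [hres] at h1 h2 h3 h0 ⊢
  by_cases hc0 : c = 0
  · simp [hc0]
  rw [integrable_smul_measure hc0 hc] at h1 h2 h3
  have hcp : 0 < c.toReal := ENNReal.toReal_pos hc0 hc
  rw [integral_smul_measure, smul_eq_mul] at h0
  rw [integral_smul_measure, integral_smul_measure, smul_eq_mul, smul_eq_mul, mul_left_comm]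
  refine mul_le_mul_of_nonneg_left ?_ hcp.le
  exact sphere_bound n hn ω K hne hω1 hK hKopen hKconv hωm Φ hd _ rfl h1 h2 h3
    ((mul_eq_zero.1 h0).resolve_left hcp.ne')
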